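/- arXiv:1301.6509 — 2 statements merged into one kernel-verified Lean document; each statement's English description precedes it below -/
import Mathlib

section
/- Fix k ≥ 1. For any two RGFs τ and τ′, each of length k and each avoiding the pattern 122, one has p_n(122, τ) = p_n(122, τ′) for all n; moreover, this common value equals p_n(112, 12⋯k), where 12⋯k is the strictly increasing pattern of length k. -/
/-- A restricted growth function (canonical sequential form of a set partition):
a word over the positive integers whose first letter is 1 and where each letter
is at most one more than the maximum of the preceding letters. -/
def IsRGF (w : List ℕ) : Prop :=
  (∀ x ∈ w, 1 ≤ x) ∧
  (w ≠ [] → w.getD 0 0 = 1) ∧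
  ∀ i, i + 1 < w.length → w.getD (i + 1) 0 ≤ ((w.take (i + 1)).foldr max 0) + 1

/-- Two words of the same length are order-isomorphic: corresponding entries
compare the same way (this preserves equalities as well). -/
def WordOrdIso (s t : List ℕ) : Prop :=
  s.length = t.length ∧
  ∀ i j, i < s.length → j < s.length →
    (s.getD i 0 < s.getD j 0 ↔ t.getD i 0 < t.getD j 0)

/-- `w` contains the pattern `p`: a subsequence of `w` is order-isomorphic to `p`. -/
def PatContains (w p : List ℕ) : Prop := ∃ s : List ℕ, s.Sublist w ∧ WordOrdIso s p

/-- `w` avoids the pattern `p`. -/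
def PatAvoids (w p : List ℕ) : Prop := ¬ PatContains w p

/-- `pCount n T` = number of RGFs of length `n` avoiding every pattern in `T`. -/
noncomputable def pCount (n : ℕ) (T : Set (List ℕ)) : ℕ :=
  {w : List ℕ | IsRGF w ∧ w.length = n ∧ ∀ p ∈ T, PatAvoids w p}.ncard

/-- The strictly increasing pattern `1 2 ⋯ r`. -/
def incPat (r : ℕ) : List ℕ := (List.range r).map (· + 1)

/-!
The RGFs of length `n + 1` avoiding `122`, and likewise those avoiding `112`, are encoded by the
binary words of length `n`, where each `true` contributes a new maximum. An RGF avoiding `122`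
consists of the records `1, 2, 3, …` interspersed with further `1`s, and containment between two
such words is exactly the subword relation between their codes. An RGF avoiding `112` is `12⋯M`
followed by a weakly decreasing word over `{1, …, M}`, and it contains `12⋯k` iff `k ≤ M`, that is,
iff its code has the subword `true^(k-1)`. Both counts thus are numbers of binary words avoiding a
subword of length `k - 1`, and this number does not depend on the subword: matching each word
greedily against `u` while exchanging the letter waited for with the corresponding letter of `u'`
turns words avoiding `u` into words avoiding `u'`.
-/

open List

section Subwords

variable {α : Type*}

/-- The words of length `n` that do not have `u` as a (scattered) subword. -/
def subwordFree (n : ℕ) (u : List α) : Set (List α) :=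
  {v | v.length = n ∧ ¬ u <+ v}

/-- The exchange of subwords `u` and `u'` in a word: reading the word from left to right, swap the
letter of `u` waited for with the letter of `u'` in the same position, and move on to the next
position whenever the letter waited for is met. -/
def exchangeSubword [DecidableEq α] : List α → List α → List α → List α
  | b :: u, b' :: u', c :: v =>
    Equiv.swap b b' c ::
      if c = b then exchangeSubword u u' v else exchangeSubword (b :: u) (b' :: u') v
  | _, _, v => v

theorem length_exchangeSubword [DecidableEq α] (u u' v : List α) :
    (exchangeSubword u u' v).length = v.length := by
  fun_induction exchangeSubword u u' v <;> grind

theorem exchangeSubword_exchangeSubword [DecidableEq α] (u u' v : List α) :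
    exchangeSubword u' u (exchangeSubword u u' v) = v := by
  induction v generalizing u u' with
  | nil => cases u <;> cases u' <;> rfl
  | cons c v ih =>
    rcases u with _ | ⟨b, u⟩ <;> rcases u' with _ | ⟨b', u'⟩
    iterate 3 rfl
    have hswap : Equiv.swap b b' c = b' ↔ c = b := by
      rw [Equiv.swap_apply_eq_iff, Equiv.swap_apply_right]
    by_cases hc : c = b <;>
      simp [exchangeSubword, hswap, hc, ih, Equiv.swap_comm b' b]

theorem sublist_exchangeSubword_iff [DecidableEq α] {u u' : List α} (h : u.length = u'.length)
    (v : List α) : u' <+ exchangeSubword u u' v ↔ u <+ v := by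
  induction v generalizing u u' with
  | nil => rcases u with _ | ⟨b, u⟩ <;> rcases u' with _ | ⟨b', u'⟩ <;> simp_all [exchangeSubword]
  | cons c v ih =>
    rcases u with _ | ⟨b, u⟩ <;> rcases u' with _ | ⟨b', u'⟩
    · simp
    · simp at h
    · simp at h
    have hswap : b' = Equiv.swap b b' c ↔ b = c := by
      rw [eq_comm, Equiv.swap_apply_eq_iff, Equiv.swap_apply_right, eq_comm]
    by_cases hc : c = b
    · subst hc
      simpa [exchangeSubword] using ih (Nat.succ.inj h)
    · simpa [exchangeSubword, hc, List.cons_sublist_cons', hswap, Ne.symm hc] using ih h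

theorem ncard_subwordFree_eq_of_length_eq (n : ℕ) {u u' : List α} (h : u.length = u'.length) :
    (subwordFree n u).ncard = (subwordFree n u').ncard := by
  classical
  have hmaps {u u' : List α} (h : u.length = u'.length) :
      Set.MapsTo (exchangeSubword u u') (subwordFree n u) (subwordFree n u') := fun v hv =>
    ⟨(length_exchangeSubword u u' v).trans hv.1, (sublist_exchangeSubword_iff h v).not.2 hv.2⟩
  have hinv : Set.InvOn (exchangeSubword u' u) (exchangeSubword u u')
      (subwordFree n u) (subwordFree n u') :=
    ⟨fun v _ => exchangeSubword_exchangeSubword u u' v,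
      fun v _ => exchangeSubword_exchangeSubword u' u v⟩
  exact (hinv.bijOn (hmaps h) (hmaps h.symm)).ncard_eq

end Subwords

section Patterns

theorem wordOrdIso_iff_getElem {s t : List ℕ} :
    WordOrdIso s t ↔ ∃ h : s.length = t.length, ∀ (i j : ℕ) (hi : i < s.length)
      (hj : j < s.length), s[i] < s[j] ↔ t[i] < t[j] := by
  refine ⟨fun ⟨hl, h⟩ => ⟨hl, fun i j hi hj => ?_⟩, fun ⟨hl, h⟩ => ⟨hl, fun i j hi hj => ?_⟩⟩ <;>
    simpa [hi, hj, hl ▸ hi, hl ▸ hj] using h i j hi hj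

theorem WordOrdIso.pairwise_lt {s t : List ℕ} (h : WordOrdIso s t) (ht : t.Pairwise (· < ·)) :
    s.Pairwise (· < ·) := by
  obtain ⟨hl, hlt⟩ := wordOrdIso_iff_getElem.1 h
  rw [pairwise_iff_getElem] at ht ⊢
  exact fun i j hi hj hij => (hlt i j hi hj).2 (ht i j (hl ▸ hi) (hl ▸ hj) hij)

theorem wordOrdIso_122_iff {a b c : ℕ} : WordOrdIso [a, b, c] [1, 2, 2] ↔ a < b ∧ b = c := by
  simp only [wordOrdIso_iff_getElem, length_cons, length_nil, exists_true_left]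
  refine ⟨fun h => ?_, ?_⟩
  · have hab : a < b := (h 0 1 (by simp) (by simp)).2 (by simp)
    have hbc : ¬ b < c := (h 1 2 (by simp) (by simp)).not.2 (by simp)
    have hcb : ¬ c < b := (h 2 1 (by simp) (by simp)).not.2 (by simp)
    omega
  · rintro ⟨hab, rfl⟩ i j hi hj
    interval_cases i <;> interval_cases j <;> grind

theorem wordOrdIso_112_iff {a b c : ℕ} : WordOrdIso [a, b, c] [1, 1, 2] ↔ a = b ∧ b < c := by
  simp only [wordOrdIso_iff_getElem, length_cons, length_nil, exists_true_left]
  refine ⟨fun h => ?_, ?_⟩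
  · have hab : ¬ a < b := (h 0 1 (by simp) (by simp)).not.2 (by simp)
    have hba : ¬ b < a := (h 1 0 (by simp) (by simp)).not.2 (by simp)
    have hbc : b < c := (h 1 2 (by simp) (by simp)).2 (by simp)
    omega
  · rintro ⟨rfl, hab⟩ i j hi hj
    interval_cases i <;> interval_cases j <;> grind

theorem patAvoids_122_iff {w : List ℕ} :
    PatAvoids w [1, 2, 2] ↔ ∀ a b, [a, b, b] <+ w → b ≤ a := by
  refine ⟨fun h a b hab => ?_, fun h ⟨s, hs, hiso⟩ => ?_⟩
  · by_contra! hlt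
    exact h ⟨_, hab, wordOrdIso_122_iff.2 ⟨hlt, rfl⟩⟩
  · obtain ⟨a, b, c, rfl⟩ := length_eq_three.1 hiso.1
    obtain ⟨hlt, rfl⟩ := wordOrdIso_122_iff.1 hiso
    exact hlt.not_ge (h a b hs)

theorem patAvoids_112_iff {w : List ℕ} :
    PatAvoids w [1, 1, 2] ↔ ∀ a b, [a, a, b] <+ w → b ≤ a := by
  refine ⟨fun h a b hab => ?_, fun h ⟨s, hs, hiso⟩ => ?_⟩
  · by_contra! hlt
    exact h ⟨_, hab, wordOrdIso_112_iff.2 ⟨rfl, hlt⟩⟩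
  · obtain ⟨a, b, c, rfl⟩ := length_eq_three.1 hiso.1
    obtain ⟨rfl, hlt⟩ := wordOrdIso_112_iff.1 hiso
    exact hlt.not_ge (h a c hs)

theorem PatContains.length_le {w p : List ℕ} (h : PatContains w p) : p.length ≤ w.length := by
  obtain ⟨s, hs, hiso⟩ := h
  exact hiso.1 ▸ hs.length_le

theorem incPat_eq_range' (r : ℕ) : incPat r = List.range' 1 r := by
  simp only [incPat, range'_eq_map_range, Nat.add_comm 1]

end Patterns

section RGFFrom

/-- `IsRGFFrom m w` says that `w` continues a restricted growth function with maximum `m`; it is the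
restricted growth condition in a form suited to recursion on the word. -/
def IsRGFFrom : ℕ → List ℕ → Prop
  | _, [] => True
  | m, x :: w => 1 ≤ x ∧ x ≤ m + 1 ∧ IsRGFFrom (max m x) w

theorem isRGFFrom_iff_getD {m : ℕ} {w : List ℕ} :
    IsRGFFrom m w ↔ (∀ x ∈ w, 1 ≤ x) ∧
      ∀ i < w.length, w.getD i 0 ≤ max m ((w.take i).foldr max 0) + 1 := by
  induction w generalizing m with
  | nil => simp [IsRGFFrom]
  | cons x w ih =>
    simp only [IsRGFFrom, ih, length_cons, Nat.forall_lt_succ_left', getD_cons_zero, take_zero,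
      foldr_nil, getD_cons_succ, take_succ_cons, foldr_cons, max_assoc, forall_mem_cons,
      Nat.max_zero]
    tauto

theorem isRGF_iff_isRGFFrom_zero {w : List ℕ} : IsRGF w ↔ IsRGFFrom 0 w := by
  rw [IsRGF, isRGFFrom_iff_getD]
  refine and_congr_right fun hpos => ⟨fun ⟨hhead, hstep⟩ i hi => ?_, fun h => ⟨fun hne => ?_, ?_⟩⟩
  · rcases i with _ | i
    · exact (hhead (ne_nil_of_length_pos hi)).trans_le (Nat.le_add_left 1 _)
    · simpa using hstep i hi
  · obtain ⟨x, w, rfl⟩ := exists_cons_of_ne_nil hne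
    exact le_antisymm (by simpa using h 0 (by simp)) (hpos x mem_cons_self)
  · exact fun i hi => by simpa using h (i + 1) hi

theorem isRGF_nil : IsRGF [] := isRGF_iff_isRGFFrom_zero.2 trivial

theorem isRGF_cons_iff {x : ℕ} {w : List ℕ} : IsRGF (x :: w) ↔ x = 1 ∧ IsRGFFrom 1 w := by
  rw [isRGF_iff_isRGFFrom_zero, IsRGFFrom]
  constructor
  · rintro ⟨hpos, hle, hw⟩
    obtain rfl : x = 1 := by omega
    exact ⟨rfl, hw⟩
  · rintro ⟨rfl, hw⟩
    exact ⟨le_rfl, le_rfl, hw⟩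

namespace IsRGFFrom

variable {m : ℕ} {w : List ℕ}

theorem one_le (h : IsRGFFrom m w) {x : ℕ} (hx : x ∈ w) : 1 ≤ x :=
  (isRGFFrom_iff_getD.1 h).1 x hx

theorem of_append {w' : List ℕ} (h : IsRGFFrom m (w ++ w')) : IsRGFFrom m w := by
  induction w generalizing m with
  | nil => trivial
  | cons x w ih => exact ⟨h.1, h.2.1, ih h.2.2⟩

theorem concat (h : IsRGFFrom m w) {x : ℕ} (hx : 1 ≤ x) (hxm : x ≤ m + 1) :
    IsRGFFrom m (w ++ [x]) := by
  induction w generalizing m with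
  | nil => exact ⟨hx, hxm, trivial⟩
  | cons y w ih => exact ⟨h.1, h.2.1, ih h.2.2 (by omega)⟩

theorem range'_sublist (h : IsRGFFrom m w) {x : ℕ} (hx : x ∈ w) :
    List.range' (m + 1) (x - m) <+ w := by
  induction w generalizing m with
  | nil => simp at hx
  | cons y w ih =>
    obtain ⟨-, hym, hw⟩ := h
    obtain hxm | hmx := le_or_gt x m
    · simp [Nat.sub_eq_zero_of_le hxm]
    obtain hym | rfl : y ≤ m ∨ y = m + 1 := by omega
    · rw [max_eq_left hym] at hw
      have hxw : x ∈ w := mem_of_ne_of_mem (by omega) hx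
      exact (ih hw hxw).cons y
    · rw [max_eq_right (Nat.le_succ m)] at hw
      obtain ⟨d, rfl⟩ : ∃ d, x = m + 1 + d := Nat.exists_eq_add_of_le hmx
      rw [show m + 1 + d - m = d + 1 by omega, range'_succ]
      refine Sublist.cons_cons _ ?_
      rcases mem_cons.1 hx with hd | hxw
      · simp [show d = 0 by omega]
      · simpa using ih hw hxw

end IsRGFFrom

theorem IsRGF.patContains_incPat_succ_iff {w : List ℕ} (hw : IsRGF w) (k : ℕ) :
    PatContains w (incPat (k + 1)) ↔ ∃ x ∈ w, k < x := by
  rw [incPat_eq_range']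
  constructor
  · rintro ⟨s, hs, hiso⟩
    by_contra! hle
    have hnodup : s.Nodup := (hiso.pairwise_lt pairwise_lt_range').imp LT.lt.ne
    have hsub : s ⊆ List.range' 1 k := fun x hx => by
      have := hw.1 x (hs.subset hx)
      have := hle x (hs.subset hx)
      rw [mem_range'_1]
      omega
    have hlen := (hnodup.subperm hsub).length_le
    rw [hiso.1, List.length_range', List.length_range'] at hlen
    omega
  · rintro ⟨x, hx, hkx⟩
    have hsub := (isRGF_iff_isRGFFrom_zero.1 hw).range'_sublist hx
    exact ⟨_, (range'_sublist_right.2 hkx).trans hsub, rfl, fun _ _ _ _ => Iff.rfl⟩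

end RGFFrom

section Counting

theorem pCount_zero {T : Set (List ℕ)} (hT : [] ∉ T) : pCount 0 T = 1 := by
  refine Set.ncard_eq_one.2 ⟨[], Set.eq_singleton_iff_unique_mem.2 ⟨⟨isRGF_nil, rfl, ?_⟩, ?_⟩⟩
  · intro p hp hcontains
    obtain rfl : p = [] := length_eq_zero_iff.1 (Nat.le_zero.1 hcontains.length_le)
    exact hT hp
  · exact fun w hw => length_eq_zero_iff.1 hw.2.1

theorem pCount_succ_eq_ncard_subwordFree {α : Type*} {f : List α → List ℕ} {p q : List ℕ}
    {u : List α} (hf : Set.BijOn f Set.univ {w | w ≠ [] ∧ IsRGF w ∧ PatAvoids w p})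
    (hlen : ∀ v, (f v).length = v.length + 1) (hq : ∀ v, PatContains (f v) q ↔ u <+ v) (n : ℕ) :
    pCount (n + 1) {p, q} = (subwordFree n u).ncard := by
  suffices h : Set.BijOn f (subwordFree n u) {w | IsRGF w ∧ w.length = n + 1 ∧
      ∀ r ∈ ({p, q} : Set (List ℕ)), PatAvoids w r} from h.ncard_eq.symm
  simp only [Set.mem_insert_iff, Set.mem_singleton_iff, forall_eq_or_imp, forall_eq]
  refine ⟨fun v hv => ?_, hf.injOn.mono (Set.subset_univ _), ?_⟩
  · obtain ⟨-, hrgf, hp⟩ := hf.mapsTo (Set.mem_univ v)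
    exact ⟨hrgf, by rw [hlen, hv.1], hp, (hq v).not.2 hv.2⟩
  · rintro w ⟨hrgf, hw, hp, hwq⟩
    obtain ⟨v, -, rfl⟩ := hf.surjOn ⟨ne_nil_of_length_eq_add_one hw, hrgf, hp⟩
    exact ⟨v, ⟨by simpa [hlen] using hw, (hq v).not.1 hwq⟩, rfl⟩

end Counting

section Avoid122

/-- A word over the positive integers in which every letter other than `1` is a strict record,
i.e. exceeds all letters before it. -/
def IsOneOrRecord (w : List ℕ) : Prop :=
  (∀ x ∈ w, 1 ≤ x) ∧ w.Pairwise fun x y => y = 1 ∨ x < y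

/-- The binary word marking the letters other than `1`. -/
def nonOneBits (w : List ℕ) : List Bool := w.map fun x => decide (x ≠ 1)

/-- The word in which the `true`s of a binary word become `m + 1, m + 2, …` and the `false`s
become `1`. -/
def recordWord : ℕ → List Bool → List ℕ
  | _, [] => []
  | m, true :: v => (m + 1) :: recordWord (m + 1) v
  | m, false :: v => 1 :: recordWord m v

theorem IsOneOrRecord.sublist {s w : List ℕ} (hw : IsOneOrRecord w) (hs : s <+ w) :
    IsOneOrRecord s :=
  ⟨fun x hx => hw.1 x (hs.subset hx), hw.2.sublist hs⟩

theorem IsOneOrRecord.patAvoids_122 {w : List ℕ} (hw : IsOneOrRecord w) :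
    PatAvoids w [1, 2, 2] := by
  refine patAvoids_122_iff.2 fun a b hab => ?_
  have ha : 1 ≤ a := hw.1 a (hab.subset mem_cons_self)
  have hb : b = 1 ∨ b < b := pairwise_iff_forall_sublist.1 hw.2 (sublist_of_cons_sublist hab)
  omega

theorem IsOneOrRecord.wordOrdIso {s t : List ℕ} (hs : IsOneOrRecord s) (ht : IsOneOrRecord t)
    (h : nonOneBits s = nonOneBits t) : WordOrdIso s t := by
  have hl : s.length = t.length := by simpa [nonOneBits] using congrArg List.length h
  have hone (i : ℕ) (hi : i < s.length) : s[i] = 1 ↔ t[i] = 1 := by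
    have := getElem_of_eq h (i := i) (by simpa [nonOneBits] using hi)
    simpa [nonOneBits, not_iff_not] using this
  refine wordOrdIso_iff_getElem.2 ⟨hl, fun i j hi hj => ?_⟩
  have hsi := hs.1 _ (getElem_mem hi)
  have hsj := hs.1 _ (getElem_mem hj)
  have hti := ht.1 _ (getElem_mem (hl ▸ hi))
  have htj := ht.1 _ (getElem_mem (hl ▸ hj))
  have hs' := pairwise_iff_getElem.1 hs.2
  have ht' := pairwise_iff_getElem.1 ht.2
  have := hone i hi
  have := hone j hj
  rcases lt_trichotomy i j with hij | rfl | hji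
  · have := hs' i j hi hj hij
    have := ht' i j (hl ▸ hi) (hl ▸ hj) hij
    omega
  · simp
  · have := hs' j i hj hi hji
    have := ht' j i (hl ▸ hj) (hl ▸ hi) hji
    omega

theorem IsOneOrRecord.nonOneBits_eq_of_wordOrdIso {a : ℕ} {s t : List ℕ}
    (hs : IsOneOrRecord (a :: s)) (ht : ∀ y ∈ t, 1 ≤ y) (h : WordOrdIso (a :: s) (1 :: t)) :
    nonOneBits s = nonOneBits t := by
  obtain ⟨hl, hlt⟩ := wordOrdIso_iff_getElem.1 h
  refine ext_getElem (by simpa [nonOneBits] using hl) fun i hi hi' => ?_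
  simp only [nonOneBits, length_map] at hi hi'
  have hiff : a < s[i] ↔ 1 < t[i] := by
    exact hlt 0 (i + 1) (by simp) (by simpa using hi)
  have ha : 1 ≤ a := hs.1 a mem_cons_self
  have hrec : s[i] = 1 ∨ a < s[i] := (pairwise_cons.1 hs.2).1 _ (getElem_mem hi)
  have hti : 1 ≤ t[i] := ht _ (getElem_mem hi')
  simp only [nonOneBits, getElem_map, decide_eq_decide]
  omega

theorem length_recordWord (m : ℕ) (v : List Bool) : (recordWord m v).length = v.length := by
  fun_induction recordWord m v <;> simp_all

theorem nonOneBits_recordWord {m : ℕ} (hm : 1 ≤ m) (v : List Bool) :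
    nonOneBits (recordWord m v) = v := by
  fun_induction recordWord m v <;> simp_all [nonOneBits]
  omega

theorem isRGFFrom_recordWord {m : ℕ} (hm : 1 ≤ m) (v : List Bool) :
    IsRGFFrom m (recordWord m v) := by
  fun_induction recordWord m v <;> simp_all [IsRGFFrom]

theorem eq_one_or_lt_of_mem_recordWord {m : ℕ} {v : List Bool} {x : ℕ}
    (hx : x ∈ recordWord m v) : x = 1 ∨ m < x := by
  fun_induction recordWord m v <;> grind

theorem isOneOrRecord_cons_recordWord {m : ℕ} (hm : 1 ≤ m) (v : List Bool) :
    IsOneOrRecord (m :: recordWord m v) := by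
  fun_induction recordWord m v with
  | case1 => simpa [IsOneOrRecord] using hm
  | case2 m v ih =>
    have := @eq_one_or_lt_of_mem_recordWord (m + 1) v
    simp only [IsOneOrRecord, pairwise_cons, mem_cons] at ih ⊢
    grind
  | case3 m v ih =>
    simp only [IsOneOrRecord, pairwise_cons, mem_cons] at ih ⊢
    grind

theorem exists_recordWord_eq {m : ℕ} (hm : 1 ≤ m) {t : List ℕ} (ht : IsRGFFrom m t)
    (hlt : ∀ x ∈ t, x = 1 ∨ m < x) (hav : ∀ a b, [a, b, b] <+ 1 :: t → b ≤ a) :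
    ∃ v, recordWord m v = t := by
  induction t generalizing m with
  | nil => exact ⟨[], rfl⟩
  | cons x t ih =>
    obtain ⟨-, hxm, ht⟩ := ht
    have hlt' : ∀ y ∈ t, y = 1 ∨ m < y := fun y hy => hlt y (mem_cons_of_mem x hy)
    have hav' : ∀ a b, [a, b, b] <+ 1 :: t → b ≤ a := fun a b hab =>
      hav a b (hab.trans (Sublist.cons_cons 1 (sublist_cons_self x t)))
    obtain rfl | rfl : x = 1 ∨ x = m + 1 := by have := hlt x mem_cons_self; omega
    · rw [max_eq_left hm] at ht
      obtain ⟨v, rfl⟩ := ih hm ht hlt' hav'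
      exact ⟨false :: v, rfl⟩
    · rw [max_eq_right (Nat.le_succ m)] at ht
      have hmem : m + 1 ∉ t := fun hmem => by
        have := hav 1 (m + 1) (by simpa using hmem)
        omega
      obtain ⟨v, rfl⟩ := ih (by omega) ht (by grind) hav'
      exact ⟨true :: v, rfl⟩

theorem bijOn_recordWord : Set.BijOn (fun v => 1 :: recordWord 1 v) Set.univ
    {w | w ≠ [] ∧ IsRGF w ∧ PatAvoids w [1, 2, 2]} := by
  refine ⟨fun v _ => ⟨cons_ne_nil _ _, isRGF_cons_iff.2 ⟨rfl, isRGFFrom_recordWord le_rfl v⟩,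
    (isOneOrRecord_cons_recordWord le_rfl v).patAvoids_122⟩, fun v _ v' _ h => ?_, ?_⟩
  · rw [← nonOneBits_recordWord le_rfl v, (cons.inj h).2, nonOneBits_recordWord le_rfl]
  · rintro (_ | ⟨x, t⟩) ⟨hne, hrgf, hav⟩
    · exact absurd rfl hne
    · obtain ⟨rfl, ht⟩ := isRGF_cons_iff.1 hrgf
      obtain ⟨v, rfl⟩ := exists_recordWord_eq le_rfl ht
        (fun x hx => eq_or_lt_of_le' (ht.one_le hx)) (patAvoids_122_iff.1 hav)
      exact ⟨v, Set.mem_univ v, rfl⟩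

theorem patContains_recordWord_iff (u v : List Bool) :
    PatContains (1 :: recordWord 1 v) (1 :: recordWord 1 u) ↔ u <+ v := by
  have hu := isOneOrRecord_cons_recordWord le_rfl u
  have hv := isOneOrRecord_cons_recordWord le_rfl v
  constructor
  · rintro ⟨s, hs, hiso⟩
    obtain ⟨a, s, rfl⟩ := exists_cons_of_length_eq_add_one hiso.1
    have hbits := (hv.sublist hs).nonOneBits_eq_of_wordOrdIso
      (fun y hy => hu.1 y (mem_cons_of_mem 1 hy)) hiso
    rw [← nonOneBits_recordWord le_rfl u, ← nonOneBits_recordWord le_rfl v, ← hbits]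
    exact hs.tail.map _
  · intro h
    rw [← nonOneBits_recordWord le_rfl v] at h
    obtain ⟨s, hs, rfl⟩ := sublist_map_iff.1 h
    have hs' := hs.cons_cons 1
    refine ⟨1 :: s, hs', (hv.sublist hs').wordOrdIso hu ?_⟩
    exact congrArg (cons _) (nonOneBits_recordWord le_rfl (nonOneBits s)).symm

theorem pCount_122_recordWord (n : ℕ) (u : List Bool) :
    pCount (n + 1) {[1, 2, 2], 1 :: recordWord 1 u} = (subwordFree n u).ncard :=
  pCount_succ_eq_ncard_subwordFree bijOn_recordWord (fun v => by simp [length_recordWord])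
    (patContains_recordWord_iff u) n

end Avoid122

section Avoid112

/-- The word obtained from a binary word by keeping track of a maximum, initially `m`: a `true`
raises the maximum and puts it at the left end of the free places, a `false` puts the current
maximum at the right end. The result increases to its maximum by steps of `1` and then decreases
weakly. -/
def unimodalWord : ℕ → List Bool → List ℕ
  | _, [] => []
  | m, true :: v => (m + 1) :: unimodalWord (m + 1) v
  | m, false :: v => unimodalWord m v ++ [m]

theorem length_unimodalWord (m : ℕ) (v : List Bool) : (unimodalWord m v).length = v.length := by
  fun_induction unimodalWord m v <;> simp_all

theorem isRGFFrom_unimodalWord {m : ℕ} (hm : 1 ≤ m) (v : List Bool) :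
    IsRGFFrom m (unimodalWord m v) := by
  fun_induction unimodalWord m v with
  | case1 => trivial
  | case2 m v ih => exact ⟨by omega, le_rfl, by simpa using ih (by omega)⟩
  | case3 m v ih => exact (ih hm).concat hm (Nat.le_succ m)

theorem le_of_mem_unimodalWord {m : ℕ} {v : List Bool} {x : ℕ} (hx : x ∈ unimodalWord m v) :
    m ≤ x := by
  fun_induction unimodalWord m v <;> grind

theorem le_of_mem_cons_unimodalWord {m : ℕ} {v : List Bool} {x : ℕ}
    (hx : x ∈ m :: unimodalWord m v) : m ≤ x :=
  (mem_cons.1 hx).elim ge_of_eq le_of_mem_unimodalWord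

theorem exists_lt_mem_unimodalWord_iff {m k : ℕ} {v : List Bool} :
    (∃ x ∈ m :: unimodalWord m v, k < x) ↔ k < m + v.count true := by
  fun_induction unimodalWord m v with
  | case1 => simp
  | case2 m v ih => grind
  | case3 m v ih =>
    rw [count_cons_of_ne Bool.false_ne_true, ← ih]
    simp only [mem_cons, mem_append, mem_nil_iff]
    grind

theorem unimodalWord_injective (m : ℕ) : Function.Injective (unimodalWord m) := by
  intro v v' h
  induction v generalizing m v' with
  | nil => grind [length_unimodalWord, unimodalWord]
  | cons b v ih =>
    have hne (v v' : List Bool) : unimodalWord m (true :: v) ≠ unimodalWord m (false :: v') := by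
      intro h
      have hm : m ∈ unimodalWord m (true :: v) := by rw [h]; simp [unimodalWord]
      exact absurd (le_of_mem_cons_unimodalWord hm) (Nat.not_succ_le_self m)
    match b, v', h with
    | true, true :: v', h => rw [ih (m + 1) (cons.inj h).2]
    | false, false :: v', h => rw [ih m (append_cancel_right h)]
    | true, false :: v', h => exact absurd h (hne v v')
    | false, true :: v', h => exact absurd h.symm (hne v' v)
    | _, [], h => simpa [length_unimodalWord] using congrArg List.length h

theorem patAvoids_112_unimodalWord (m : ℕ) (v : List Bool) :
    PatAvoids (m :: unimodalWord m v) [1, 1, 2] := by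
  rw [patAvoids_112_iff]
  fun_induction unimodalWord m v with
  | case1 => grind
  | case2 m v ih =>
    intro a b hab
    rcases sublist_cons_iff.1 hab with hab | ⟨r, hr, hr'⟩
    · exact ih a b hab
    · obtain ⟨rfl, rfl⟩ := cons.inj hr
      have hmem : a ∈ (a + 1) :: unimodalWord (a + 1) v := hr'.subset mem_cons_self
      have hlt : a + 1 ≤ a := le_of_mem_cons_unimodalWord hmem
      omega
  | case3 m v ih =>
    intro a b hab
    rw [← cons_append, sublist_append_iff] at hab
    obtain ⟨l, r, hlr, hl, hr⟩ := hab
    rcases sublist_singleton.1 hr with rfl | rfl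
    · rw [append_nil] at hlr
      exact ih a b (hlr ▸ hl)
    · obtain ⟨rfl, hbm⟩ := append_inj' (s₁ := [a, a]) (t₁ := [b]) hlr rfl
      obtain rfl : b = m := singleton_injective hbm
      exact le_of_mem_cons_unimodalWord (hl.subset mem_cons_self)

theorem exists_unimodalWord_eq {m : ℕ} {t : List ℕ} (ht : IsRGFFrom m t)
    (hle : ∀ x ∈ t, m ≤ x) (hav : ∀ a b, [a, a, b] <+ m :: t → b ≤ a) :
    ∃ v, unimodalWord m v = t := by
  induction hn : t.length generalizing m t with
  | zero => exact ⟨[], (length_eq_zero_iff.1 hn).symm⟩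
  | succ n ih =>
    by_cases hm : m ∈ t
    · obtain ⟨s, b, rfl⟩ := (eq_nil_or_concat' t).resolve_left (ne_nil_of_mem hm)
      have hb : b = m := by
        rcases mem_append.1 hm with hms | hmb
        · have hsub : [m, m, b] <+ m :: (s ++ [b]) :=
            Sublist.cons_cons m ((singleton_sublist.2 hms).append (Sublist.refl [b]))
          exact (hav m b hsub).antisymm (hle b (by simp))
        · exact (mem_singleton.1 hmb).symm
      obtain ⟨v, rfl⟩ := ih ht.of_append (fun x hx => hle x (mem_append_left _ hx))
        (fun a c hac => hav a c (hac.trans ((sublist_append_left s [b]).cons_cons m)))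
        (by simpa using hn)
      exact ⟨false :: v, by rw [hb, unimodalWord]⟩
    · obtain ⟨x, t, rfl⟩ := exists_cons_of_length_eq_add_one hn
      have hlt : ∀ y ∈ x :: t, m + 1 ≤ y := fun y hy =>
        (hle y hy).lt_of_ne fun hmy => hm (hmy ▸ hy)
      obtain rfl : x = m + 1 := ht.2.1.antisymm (hlt x mem_cons_self)
      obtain ⟨v, rfl⟩ := ih (by simpa using ht.2.2) (fun y hy => hlt y (mem_cons_of_mem _ hy))
        (fun a b hab => hav a b (hab.cons m)) (by simpa using hn)
      exact ⟨true :: v, rfl⟩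

theorem bijOn_unimodalWord : Set.BijOn (fun v => 1 :: unimodalWord 1 v) Set.univ
    {w | w ≠ [] ∧ IsRGF w ∧ PatAvoids w [1, 1, 2]} := by
  refine ⟨fun v _ => ⟨cons_ne_nil _ _, isRGF_cons_iff.2 ⟨rfl, isRGFFrom_unimodalWord le_rfl v⟩,
    patAvoids_112_unimodalWord 1 v⟩, fun v _ v' _ h => unimodalWord_injective 1 (cons.inj h).2, ?_⟩
  rintro (_ | ⟨x, t⟩) ⟨hne, hrgf, hav⟩
  · exact absurd rfl hne
  · obtain ⟨rfl, ht⟩ := isRGF_cons_iff.1 hrgf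
    obtain ⟨v, rfl⟩ := exists_unimodalWord_eq ht (fun _ => ht.one_le) (patAvoids_112_iff.1 hav)
    exact ⟨v, Set.mem_univ v, rfl⟩

theorem patContains_unimodalWord_iff (k : ℕ) (v : List Bool) :
    PatContains (1 :: unimodalWord 1 v) (incPat (k + 1)) ↔ replicate k true <+ v := by
  have hrgf : IsRGF (1 :: unimodalWord 1 v) :=
    isRGF_cons_iff.2 ⟨rfl, isRGFFrom_unimodalWord le_rfl v⟩
  rw [hrgf.patContains_incPat_succ_iff, exists_lt_mem_unimodalWord_iff, replicate_sublist_iff]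
  omega

theorem pCount_112_incPat (n k : ℕ) :
    pCount (n + 1) {[1, 1, 2], incPat (k + 1)} = (subwordFree n (replicate k true)).ncard :=
  pCount_succ_eq_ncard_subwordFree bijOn_unimodalWord (fun v => by simp [length_unimodalWord])
    (patContains_unimodalWord_iff k) n

end Avoid112

/-- Corollary 2.15: all pairs `(122, τ)` with `τ` a 122-avoiding RGF of length `k`
are Wilf-equivalent, and equivalent to the pair `(112, 12⋯k)`. -/
theorem stmt4 (k : ℕ) (hk : 1 ≤ k) (τ τ' : List ℕ)
    (hτ : IsRGF τ) (hτ' : IsRGF τ')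
    (hlen : τ.length = k) (hlen' : τ'.length = k)
    (hav : PatAvoids τ [1,2,2]) (hav' : PatAvoids τ' [1,2,2]) :
    ∀ n : ℕ, pCount n {[1,2,2], τ} = pCount n {[1,2,2], τ'} ∧
      pCount n {[1,2,2], τ} = pCount n {[1,1,2], incPat k} := by
  obtain ⟨k, rfl⟩ : ∃ j, k = j + 1 := Nat.exists_eq_add_of_le' hk
  have hne : τ ≠ [] := ne_nil_of_length_eq_add_one hlen
  have hne' : τ' ≠ [] := ne_nil_of_length_eq_add_one hlen'
  rintro (_ | n)
  · have hinc : incPat (k + 1) ≠ [] := by simp [incPat]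
    simp [pCount_zero, hne.symm, hne'.symm, hinc.symm]
  · obtain ⟨u, -, rfl⟩ := bijOn_recordWord.surjOn ⟨hne, hτ, hav⟩
    obtain ⟨u', -, rfl⟩ := bijOn_recordWord.surjOn ⟨hne', hτ', hav'⟩
    simp only [length_cons, length_recordWord, Nat.add_right_cancel_iff] at hlen hlen'
    simp only [pCount_122_recordWord, pCount_112_incPat]
    exact ⟨ncard_subwordFree_eq_of_length_eq n (hlen.trans hlen'.symm),
      ncard_subwordFree_eq_of_length_eq n (by rw [hlen, length_replicate])⟩
end

section
/- Let σ be a connected non-crossing RGF and let ρ be any non-crossing RGF. Then σ[ρ] ≃cc ρ[σ]. -/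
/-- A word is non-crossing if it avoids the pattern 1212. -/
def NonCrossing (w : List ℕ) : Prop := PatAvoids w [1,2,1,2]

/-- The number of distinct letters of an RGF equals its maximum letter. -/
def nLetters (w : List ℕ) : ℕ := w.foldr max 0

/-- `rgfComp a b` is the pattern `a[b]`: `a` followed by `b` shifted up by the
number of distinct letters of `a`. -/
def rgfComp (a b : List ℕ) : List ℕ := a ++ b.map (· + nLetters a)

/-- A connected RGF: nonempty and not expressible as `σ[τ]` with `σ, τ` nonempty RGFs. -/
def Connected (w : List ℕ) : Prop :=
  w ≠ [] ∧ ¬ ∃ a b : List ℕ, IsRGF a ∧ IsRGF b ∧ a ≠ [] ∧ b ≠ [] ∧ w = rgfComp a b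

/-- `w` decomposes as `σ₁[σ₂]⋯[σ_p]` with each `σ_i` a connected RGF. -/
def HasComponents (w : List ℕ) (p : ℕ) : Prop :=
  ∃ l : List (List ℕ), l.length = p ∧ (∀ c ∈ l, IsRGF c ∧ Connected c) ∧
    w = l.foldr rgfComp []

/-- Number of non-crossing RGFs of length `n` with `p` components avoiding `σ`. -/
noncomputable def ncCount (n p : ℕ) (σ : List ℕ) : ℕ :=
  {w : List ℕ | IsRGF w ∧ NonCrossing w ∧ w.length = n ∧ PatAvoids w σ ∧
    HasComponents w p}.ncard

/-- cc-equivalence of patterns. -/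
def ccEquiv (σ τ : List ℕ) : Prop := ∀ n p : ℕ, ncCount n p σ = ncCount n p τ

/-- Number of non-crossing RGFs of length `n` avoiding `σ`. -/
noncomputable def ncAvoidCount (n : ℕ) (σ : List ℕ) : ℕ :=
  {w : List ℕ | IsRGF w ∧ NonCrossing w ∧ w.length = n ∧ PatAvoids w σ}.ncard

/-- Auxiliary: builds `1[σ₁]1[σ₂]⋯1[σ_k]1` with accumulated letter shift `s`. -/
def onePatAux : ℕ → List (List ℕ) → List ℕ
  | _, [] => [1]
  | s, c :: rest => 1 :: (c.map (· + s) ++ onePatAux (s + nLetters c) rest)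

/-- The pattern `1[σ₁]1[σ₂]⋯1[σ_k]1`. -/
def onePat (l : List (List ℕ)) : List ℕ := onePatAux 1 l

/-- The pattern `1[σ]1[τ]`. -/
def pat2 (σ τ : List ℕ) : List ℕ :=
  1 :: (σ.map (· + 1) ++ 1 :: τ.map (· + (1 + nLetters σ)))

/-
Cut a non-crossing word at a height `k`: keep the part `X` before the first letter larger than `k`
and the subword `Y` of the letters larger than `k`. What is lost are the later letters at most
`k`, and avoiding crossings forces them to form a chain of returns from currently visible letters
of `Y` to visible letters of `X`; measured by ranks this chain is a weakly increasing staircase in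
a rectangle whose sides are the numbers of visible letters of `X` and `Y`. Transposing the
staircase exchanges the roles of `X` and `Y` and preserves the length and the number of
components.

A word containing `σ` avoids `σ[ρ]` exactly when, cut at the least `k` for which `X` contains `σ`,
its `Y` avoids `ρ`; and it avoids `ρ[σ]` exactly when, cut at the greatest `k` for which `Y`
contains `σ`, its `X` avoids `ρ`. So the theorem for `σ` and all `ρ` follows once the possible
minimal `X` and the possible maximal `Y` are equidistributed. For `σ = [1]` they are the same
words, whence `[1][σ] ≃cc σ[1]` for every `σ`, and this is the equidistribution required for `σ`.
-/

namespace NonCrossingRGF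

open Finset

section Equidistribution

variable {α β γ ι : Type*} {s : Set α} {f : α → ι} {t : Set β} {g : β → ι} {u : Set γ} {h : γ → ι}

/-- The statistics `f` on `s` and `g` on `t` are equidistributed: every value is attained by equally
many elements. Only meaningful in this form for finite fibres. -/
def Equidistributed (s : Set α) (f : α → ι) (t : Set β) (g : β → ι) : Prop :=
  ∀ i, {x ∈ s | f x = i}.encard = {y ∈ t | g y = i}.encard

theorem Equidistributed.symm (hst : Equidistributed s f t g) : Equidistributed t g s f :=
  fun i => (hst i).symm

theorem Equidistributed.trans (hst : Equidistributed s f t g) (htu : Equidistributed t g u h) :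
    Equidistributed s f u h :=
  fun i => (hst i).trans (htu i)

theorem Equidistributed.of_bijOn {φ : α → β} (hφ : Set.BijOn φ s t)
    (hfg : ∀ x ∈ s, g (φ x) = f x) : Equidistributed s f t g := by
  intro i
  have himage : φ '' {x ∈ s | f x = i} = {y ∈ t | g y = i} := by
    ext y
    constructor
    · rintro ⟨x, ⟨hx, rfl⟩, rfl⟩
      exact ⟨hφ.mapsTo hx, hfg x hx⟩
    · rintro ⟨hy, rfl⟩
      obtain ⟨x, hx, rfl⟩ := hφ.surjOn hy
      exact ⟨x, ⟨hx, (hfg x hx).symm⟩, rfl⟩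
  rw [← himage, (hφ.injOn.mono fun x hx => hx.1).encard_image]

theorem Equidistributed.exists_bijOn [Nonempty β] (hst : Equidistributed s f t g)
    (hfin : ∀ i, {x ∈ s | f x = i}.Finite) :
    ∃ φ : α → β, Set.BijOn φ s t ∧ ∀ x ∈ s, g (φ x) = f x := by
  choose φ hφ using fun i => (hfin i).exists_bijOn_of_encard_eq (hst i)
  have hmem : ∀ x ∈ s, φ (f x) x ∈ t ∧ g (φ (f x) x) = f x := fun x hx =>
    (hφ (f x)).mapsTo ⟨hx, rfl⟩
  refine ⟨fun x => φ (f x) x, ⟨fun x hx => (hmem x hx).1, fun x hx y hy hxy => ?_,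
    fun y hy => ?_⟩, fun x hx => (hmem x hx).2⟩
  · have hf : f x = f y := by rw [← (hmem x hx).2, ← (hmem y hy).2]; exact congrArg g hxy
    exact (hφ (f y)).injOn ⟨hx, hf⟩ ⟨hy, rfl⟩ (by simpa only [hf] using hxy)
  · obtain ⟨x, ⟨hx, hfx⟩, hxy⟩ := (hφ (g y)).surjOn ⟨hy, rfl⟩
    exact ⟨x, hx, by simpa only [hfx] using hxy⟩

theorem encard_sdiff_fibre_add_encard_fibre {r s : Set α} (hrs : r ⊆ s) (f : α → ι) (i : ι) :
    {x ∈ s \ r | f x = i}.encard + {x ∈ r | f x = i}.encard = {x ∈ s | f x = i}.encard := by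
  rw [← Set.encard_sdiff_add_encard_of_subset (s := {x ∈ r | f x = i}) (t := {x ∈ s | f x = i})
    fun x hx => ⟨hrs hx.1, hx.2⟩]
  congr 2
  ext x
  simp only [Set.mem_ofPred_eq, Set.mem_sdiff]
  tauto

theorem Equidistributed.sdiff {r s : Set α} {r' s' : Set β} (hfin : ∀ i, {x ∈ s | f x = i}.Finite)
    (hrs : r ⊆ s) (hrs' : r' ⊆ s') (hr : Equidistributed r f r' g) (hs : Equidistributed s f s' g) :
    Equidistributed (s \ r) f (s' \ r') g := by
  intro i
  have hne : {x ∈ r | f x = i}.encard ≠ ⊤ :=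
    Set.encard_ne_top_iff.2 ((hfin i).subset fun x hx => ⟨hrs hx.1, hx.2⟩)
  refine ENat.add_left_injective_of_ne_top hne ?_
  calc {x ∈ s \ r | f x = i}.encard + {x ∈ r | f x = i}.encard
      = {x ∈ s | f x = i}.encard := encard_sdiff_fibre_add_encard_fibre hrs f i
    _ = {y ∈ s' | g y = i}.encard := hs i
    _ = {y ∈ s' \ r' | g y = i}.encard + {y ∈ r' | g y = i}.encard :=
      (encard_sdiff_fibre_add_encard_fibre hrs' g i).symm
    _ = {y ∈ s' \ r' | g y = i}.encard + {x ∈ r | f x = i}.encard := by rw [hr i]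

end Equidistribution

section Letters

theorem nLetters_cons (a : ℕ) (w : List ℕ) : nLetters (a :: w) = max a (nLetters w) := rfl

theorem nLetters_le_iff {w : List ℕ} {k : ℕ} : nLetters w ≤ k ↔ ∀ x ∈ w, x ≤ k := by
  induction w with
  | nil => simp [nLetters]
  | cons a w ih => rw [nLetters_cons, max_le_iff, ih, List.forall_mem_cons]

theorem le_nLetters {w : List ℕ} {x : ℕ} (hx : x ∈ w) : x ≤ nLetters w :=
  nLetters_le_iff.1 le_rfl x hx

theorem nLetters_le_of_subset {v w : List ℕ} (h : v ⊆ w) : nLetters v ≤ nLetters w :=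
  nLetters_le_iff.2 fun _ hx => le_nLetters (h hx)

theorem nLetters_reverse (w : List ℕ) : nLetters w.reverse = nLetters w :=
  le_antisymm (nLetters_le_of_subset fun _ => List.mem_reverse.1)
    (nLetters_le_of_subset fun _ => List.mem_reverse.2)

theorem nLetters_append (v w : List ℕ) : nLetters (v ++ w) = max (nLetters v) (nLetters w) := by
  induction v with
  | nil => simp [nLetters]
  | cons a v ih => rw [List.cons_append, nLetters_cons, nLetters_cons, ih, max_assoc]

theorem nLetters_map_add (w : List ℕ) (m : ℕ) :
    max m (nLetters (w.map (· + m))) = nLetters w + m := by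
  induction w with
  | nil => simp [nLetters]
  | cons a w ih =>
    rw [List.map_cons, nLetters_cons, nLetters_cons, max_left_comm, ih, Nat.add_max_add_right]

theorem rgfComp_nil_right (a : List ℕ) : rgfComp a [] = a := List.append_nil a

theorem nLetters_rgfComp (a b : List ℕ) : nLetters (rgfComp a b) = nLetters a + nLetters b := by
  rw [rgfComp, nLetters_append, nLetters_map_add, Nat.add_comm]

theorem rgfComp_assoc (a b c : List ℕ) :
    rgfComp (rgfComp a b) c = rgfComp a (rgfComp b c) := by
  rw [rgfComp, nLetters_rgfComp]
  simp only [rgfComp, List.map_append, List.map_map, List.append_assoc, Function.comp_def,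
    Nat.add_right_comm _ (nLetters b), Nat.add_assoc]

end Letters

section Patterns

theorem wordOrdIso_iff_exists_pairs {s t : List ℕ} :
    WordOrdIso s t ↔ ∃ l : List (ℕ × ℕ), l.map Prod.fst = s ∧ l.map Prod.snd = t ∧
      ∀ p ∈ l, ∀ q ∈ l, (p.1 < q.1 ↔ p.2 < q.2) := by
  constructor
  · rintro ⟨hlen, hst⟩
    refine ⟨s.zip t, List.map_fst_zip hlen.le, List.map_snd_zip hlen.ge, fun p hp q hq => ?_⟩
    obtain ⟨i, hi, rfl⟩ := List.mem_iff_getElem.1 hp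
    obtain ⟨j, hj, rfl⟩ := List.mem_iff_getElem.1 hq
    rw [List.length_zip, lt_min_iff] at hi hj
    simpa only [List.getElem_zip, List.getD_eq_getElem _ _ hi.1, List.getD_eq_getElem _ _ hi.2,
      List.getD_eq_getElem _ _ hj.1, List.getD_eq_getElem _ _ hj.2] using hst i j hi.1 hj.1
  · rintro ⟨l, rfl, rfl, hl⟩
    refine ⟨by rw [List.length_map, List.length_map], fun i j hi hj => ?_⟩
    rw [List.length_map] at hi hj
    simpa [List.getD_eq_getElem, hi, hj] using hl _ (l.getElem_mem hi) _ (l.getElem_mem hj)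

theorem wordOrdIso_map_left {s t : List ℕ} {f : ℕ → ℕ} (hf : StrictMono f) :
    WordOrdIso (s.map f) t ↔ WordOrdIso s t := by
  rw [WordOrdIso, WordOrdIso, List.length_map]
  refine and_congr_right fun _ => forall₂_congr fun i j => forall₂_congr fun hi hj => ?_
  rw [List.getD_eq_getElem _ _ (by simpa using hi), List.getD_eq_getElem _ _ (by simpa using hj),
    List.getElem_map, List.getElem_map, hf.lt_iff_lt, List.getD_eq_getElem _ _ hi,
    List.getD_eq_getElem _ _ hj]

theorem wordOrdIso_comm {s t : List ℕ} : WordOrdIso s t ↔ WordOrdIso t s := by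
  suffices h : ∀ {s t : List ℕ}, WordOrdIso s t → WordOrdIso t s from ⟨h, h⟩
  rintro s t ⟨hlen, hst⟩
  exact ⟨hlen.symm, fun i j hi hj => (hst i j (hlen ▸ hi) (hlen ▸ hj)).symm⟩

theorem wordOrdIso_append_iff {s t t' : List ℕ} (ht : ∀ x ∈ t, ∀ y ∈ t', x < y) :
    WordOrdIso s (t ++ t') ↔ ∃ r r', s = r ++ r' ∧ WordOrdIso r t ∧ WordOrdIso r' t' ∧
      ∀ x ∈ r, ∀ y ∈ r', x < y := by
  simp only [wordOrdIso_iff_exists_pairs]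
  constructor
  · rintro ⟨l, rfl, hl, hord⟩
    obtain ⟨l₁, l₂, rfl, rfl, rfl⟩ := List.map_eq_append_iff.1 hl
    refine ⟨_, _, List.map_append, ⟨l₁, rfl, rfl, fun p hp q hq => hord p (by simp [hp]) q
      (by simp [hq])⟩, ⟨l₂, rfl, rfl, fun p hp q hq => hord p (by simp [hp]) q (by simp [hq])⟩, ?_⟩
    rw [List.forall_mem_map]
    intro p hp
    rw [List.forall_mem_map]
    intro q hq
    exact (hord p (by simp [hp]) q (by simp [hq])).2
      (ht _ (List.mem_map_of_mem hp) _ (List.mem_map_of_mem hq))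
  · rintro ⟨_, _, rfl, ⟨l₁, rfl, rfl, h₁⟩, ⟨l₂, rfl, rfl, h₂⟩, hlt⟩
    refine ⟨l₁ ++ l₂, List.map_append, List.map_append, ?_⟩
    have h₁₂ : ∀ p ∈ l₁, ∀ q ∈ l₂, p.1 < q.1 ∧ p.2 < q.2 := fun p hp q hq =>
      ⟨hlt _ (List.mem_map_of_mem hp) _ (List.mem_map_of_mem hq),
        ht _ (List.mem_map_of_mem hp) _ (List.mem_map_of_mem hq)⟩
    intro p hp q hq
    rcases List.mem_append.1 hp with hp | hp <;> rcases List.mem_append.1 hq with hq | hq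
    · exact h₁ p hp q hq
    · exact iff_of_true (h₁₂ p hp q hq).1 (h₁₂ p hp q hq).2
    · exact iff_of_false (h₁₂ q hq p hp).1.not_gt (h₁₂ q hq p hp).2.not_gt
    · exact h₂ p hp q hq

theorem wordOrdIso_rgfComp_iff {s a b : List ℕ} (hb : ∀ x ∈ b, 1 ≤ x) :
    WordOrdIso s (rgfComp a b) ↔ ∃ r r', s = r ++ r' ∧ WordOrdIso r a ∧ WordOrdIso r' b ∧
      ∀ x ∈ r, ∀ y ∈ r', x < y := by
  rw [rgfComp, wordOrdIso_append_iff]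
  · simp only [wordOrdIso_comm (t := b.map _), wordOrdIso_comm (t := b),
      wordOrdIso_map_left (add_left_strictMono (a := nLetters a))]
  · intro x hx y hy
    obtain ⟨z, hz, rfl⟩ := List.mem_map.1 hy
    have := le_nLetters hx
    have := hb z hz
    omega

theorem patContains_mono {v w p : List ℕ} (hvw : v.Sublist w) : PatContains v p → PatContains w p :=
  fun ⟨s, hs, hsp⟩ => ⟨s, hs.trans hvw, hsp⟩

theorem patContains_singleton_iff {w : List ℕ} {a : ℕ} : PatContains w [a] ↔ w ≠ [] := by
  constructor
  · rintro ⟨s, hs, hlen, -⟩ rfl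
    rw [List.sublist_nil.1 hs] at hlen
    exact absurd hlen (by simp)
  · intro hw
    obtain ⟨x, v, rfl⟩ := List.exists_cons_of_ne_nil hw
    refine ⟨[x], by simp, rfl, fun i j hi hj => ?_⟩
    obtain rfl := Nat.lt_one_iff.1 hi
    obtain rfl := Nat.lt_one_iff.1 hj
    simp

theorem nonCrossing_iff {w : List ℕ} :
    NonCrossing w ↔ ∀ x y, x < y → ¬[x, y, x, y].Sublist w := by
  constructor
  · intro hw x y hxy hsub
    refine hw ⟨_, hsub, wordOrdIso_iff_exists_pairs.2
      ⟨[(x, 1), (y, 2), (x, 1), (y, 2)], rfl, rfl, ?_⟩⟩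
    simp [hxy, hxy.le]
  · rintro hw ⟨s, hs, hiso⟩
    obtain ⟨l, rfl, hl, hord⟩ := wordOrdIso_iff_exists_pairs.1 hiso
    simp only [List.map_eq_cons_iff, List.map_eq_nil_iff] at hl
    obtain ⟨⟨x, _⟩, _, rfl, rfl, ⟨y, _⟩, _, rfl, rfl, ⟨x', _⟩, _, rfl, rfl, ⟨y', _⟩, _, rfl, rfl,
      rfl⟩ := hl
    simp only [List.forall_mem_cons] at hord
    obtain ⟨rfl, rfl, hxy⟩ : x' = x ∧ y' = y ∧ x < y := by omega
    exact hw _ _ hxy hs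

end Patterns

section ReversedWords

/-- Words are built letter by letter from the left, so they are stored reversed, their last letter
being the head of the list. The visible letters of such a word are those which, from their last
occurrence on, are followed by larger letters only: a letter that has already occurred can be
written next without creating a crossing exactly when it is visible. -/
def visible : List ℕ → Finset ℕ
  | [] => ∅
  | a :: L => insert a ({x ∈ visible L | x < a})

/-- The reversals of the non-crossing restricted growth functions, described by the letters that
may be written next. -/
def RevNC : List ℕ → Prop
  | [] => True
  | a :: L => RevNC L ∧ (a = nLetters L + 1 ∨ a ∈ visible L)

theorem mem_visible_cons {a x : ℕ} {L : List ℕ} :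
    x ∈ visible (a :: L) ↔ x = a ∨ x ∈ visible L ∧ x < a := by
  rw [visible, mem_insert, mem_filter]

theorem le_of_mem_visible_cons {a x : ℕ} {L : List ℕ} (hx : x ∈ visible (a :: L)) : x ≤ a := by
  rcases mem_visible_cons.1 hx with rfl | ⟨-, hxa⟩
  exacts [le_rfl, hxa.le]

theorem mem_visible_iff {L : List ℕ} {a : ℕ} :
    a ∈ visible L ↔ ∃ M N, L = M ++ a :: N ∧ ∀ x ∈ M, a < x := by
  induction L with
  | nil => simp [visible]
  | cons b L ih =>
    rw [mem_visible_cons, ih]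
    constructor
    · rintro (rfl | ⟨⟨M, N, rfl, hM⟩, hab⟩)
      · exact ⟨[], L, rfl, by simp⟩
      · exact ⟨b :: M, N, rfl, List.forall_mem_cons.2 ⟨hab, hM⟩⟩
    · rintro ⟨_ | ⟨c, M⟩, N, hL, hM⟩
      · exact Or.inl (List.cons.inj hL).1.symm
      · obtain ⟨rfl, rfl⟩ := List.cons.inj hL
        rw [List.forall_mem_cons] at hM
        exact Or.inr ⟨⟨M, N, rfl, hM.2⟩, hM.1⟩

theorem mem_of_mem_visible {L : List ℕ} {a : ℕ} (ha : a ∈ visible L) : a ∈ L := by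
  obtain ⟨M, N, rfl, -⟩ := mem_visible_iff.1 ha
  exact List.mem_append_right M List.mem_cons_self

theorem RevNC.of_append {M N : List ℕ} (h : RevNC (M ++ N)) : RevNC N := by
  induction M with
  | nil => exact h
  | cons a M ih => exact ih h.1

theorem RevNC.pos {L : List ℕ} (hL : RevNC L) : ∀ x ∈ L, 1 ≤ x := by
  induction L with
  | nil => simp
  | cons a L ih =>
    refine List.forall_mem_cons.2 ⟨?_, ih hL.1⟩
    rcases hL.2 with rfl | ha
    exacts [Nat.le_add_left 1 _, ih hL.1 a (mem_of_mem_visible ha)]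

theorem RevNC.head_le {L : List ℕ} {a : ℕ} (h : RevNC (a :: L)) : a ≤ nLetters L + 1 := by
  rcases h.2 with rfl | ha
  exacts [le_rfl, (le_nLetters (mem_of_mem_visible ha)).trans (Nat.le_succ _)]

theorem RevNC.mem_of_le {L : List ℕ} (hL : RevNC L) {x : ℕ} (hx : 1 ≤ x) (hxL : x ≤ nLetters L) :
    x ∈ L := by
  induction L with
  | nil => exact absurd (hx.trans hxL) (by simp [nLetters])
  | cons a L ih =>
    have ha := hL.head_le
    rw [nLetters_cons] at hxL
    by_cases hxL' : x ≤ nLetters L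
    · exact List.mem_cons_of_mem a (ih hL.1 hxL')
    · rw [show x = a by omega]
      exact List.mem_cons_self

theorem isRGF_iff {w : List ℕ} :
    IsRGF w ↔ (∀ x ∈ w, 1 ≤ x) ∧ ∀ i < w.length, w.getD i 0 ≤ nLetters (w.take i) + 1 := by
  refine and_congr_right fun hpos => ⟨fun ⟨hfirst, hstep⟩ i hi => ?_, fun h => ⟨fun hw => ?_,
    fun i hi => h (i + 1) hi⟩⟩
  · cases i with
    | zero => exact (hfirst (List.length_pos_iff.1 hi)).le
    | succ i => exact hstep i hi
  · have hlen := List.length_pos_iff.2 hw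
    refine le_antisymm (h 0 hlen) ?_
    rw [List.getD_eq_getElem _ _ hlen]
    exact hpos _ (List.getElem_mem hlen)

theorem isRGF_concat {w : List ℕ} {a : ℕ} :
    IsRGF (w ++ [a]) ↔ IsRGF w ∧ 1 ≤ a ∧ a ≤ nLetters w + 1 := by
  have hmax : (∀ i < (w ++ [a]).length, (w ++ [a]).getD i 0 ≤ nLetters ((w ++ [a]).take i) + 1) ↔
      (∀ i < w.length, w.getD i 0 ≤ nLetters (w.take i) + 1) ∧ a ≤ nLetters w + 1 := by
    rw [List.length_append, List.length_singleton, Nat.forall_lt_succ_right]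
    refine and_congr (forall₂_congr fun i hi => ?_) ?_
    · rw [List.getD_append _ _ _ _ hi, List.take_append_of_le_length hi.le]
    · simp
  rw [isRGF_iff, isRGF_iff, hmax, List.forall_mem_append, List.forall_mem_singleton]
  tauto

theorem nonCrossing_reverse_iff {L : List ℕ} :
    NonCrossing L.reverse ↔ ∀ x y, x < y → ¬[y, x, y, x].Sublist L :=
  nonCrossing_iff.trans <| forall₃_congr fun x y _ => not_congr <| by
    rw [← List.reverse_sublist, List.reverse_reverse, List.reverse_cons, List.reverse_cons]; rfl

theorem nonCrossing_reverse_cons {L : List ℕ} {a : ℕ} :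
    NonCrossing (a :: L).reverse ↔ NonCrossing L.reverse ∧ ∀ x < a, ¬[x, a, x].Sublist L := by
  rw [nonCrossing_reverse_iff, nonCrossing_reverse_iff]
  constructor
  · exact fun h => ⟨fun x y hxy hsub => h x y hxy (hsub.cons a),
      fun x hx hsub => h x a hx (hsub.cons_cons a)⟩
  · rintro ⟨hL, ha⟩ x y hxy hsub
    rcases List.cons_sublist_cons'.1 hsub with hsub' | ⟨rfl, hsub'⟩
    exacts [hL x y hxy hsub', ha x hxy hsub']

theorem mem_visible_iff_forall_not_sublist {L : List ℕ} {a : ℕ} (hL : RevNC L)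
    (hnc : NonCrossing L.reverse) (ha : a ∈ L) :
    a ∈ visible L ↔ ∀ x < a, ¬[x, a, x].Sublist L := by
  constructor
  · intro hvis x hxa hsub
    obtain ⟨M, N, rfl, hM⟩ := mem_visible_iff.1 hvis
    have hN : [x, a, x].Sublist N := by
      obtain ⟨l₁, l₂, hl, h₁, h₂⟩ := List.sublist_append_iff.1 hsub
      rcases l₁ with _ | ⟨y, l₁⟩
      · obtain rfl : [x, a, x] = l₂ := hl
        exact (List.cons_sublist_cons'.1 h₂).resolve_right fun h => hxa.ne h.1
      · obtain rfl := (List.cons.inj hl).1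
        exact absurd (hM x (h₁.subset List.mem_cons_self)) hxa.not_gt
    exact nonCrossing_reverse_iff.1 hnc x a hxa
      ((hN.cons_cons a).trans (List.sublist_append_right M _))
  · intro h
    obtain ⟨M, N, rfl, haM⟩ := List.eq_append_cons_of_mem ha
    refine mem_visible_iff.2 ⟨M, N, rfl, fun x hx => ?_⟩
    by_contra! hxa
    have hlt : x < a := hxa.lt_of_ne fun h => haM (h ▸ hx)
    have hxN : x ∈ N := hL.of_append.1.mem_of_le (hL.pos x (List.mem_append_left _ hx))
      (Nat.lt_succ_iff.1 (hlt.trans_le hL.of_append.head_le))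
    exact h x hlt ((List.singleton_sublist.2 hx).append
      ((List.singleton_sublist.2 hxN).cons_cons a))

theorem revNC_iff {L : List ℕ} : RevNC L ↔ IsRGF L.reverse ∧ NonCrossing L.reverse := by
  induction L with
  | nil => exact iff_of_true trivial ⟨by simp [IsRGF], nonCrossing_iff.2 (by simp)⟩
  | cons a L ih =>
    rw [nonCrossing_reverse_cons, List.reverse_cons, isRGF_concat, nLetters_reverse, RevNC]
    constructor
    · rintro ⟨hL, ha⟩
      have haL : RevNC (a :: L) := ⟨hL, ha⟩
      have hnc := (ih.1 hL).2
      refine ⟨⟨(ih.1 hL).1, haL.pos a List.mem_cons_self, haL.head_le⟩, hnc, ?_⟩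
      rcases ha with rfl | ha
      · intro x _ hsub
        exact absurd (le_nLetters (hsub.subset (a := nLetters L + 1) (by simp))) (by simp)
      · exact (mem_visible_iff_forall_not_sublist hL hnc (mem_of_mem_visible ha)).1 ha
    · rintro ⟨⟨hrgf, ha, haL⟩, hnc, hsub⟩
      have hL := ih.2 ⟨hrgf, hnc⟩
      refine ⟨hL, haL.lt_or_eq.symm.imp_right fun hlt => ?_⟩
      exact (mem_visible_iff_forall_not_sublist hL hnc
        (hL.mem_of_le ha (Nat.lt_succ_iff.1 hlt))).2 hsub

end ReversedWords

section Cutting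

/-- The part of a reversed word before its first letter larger than `k`. -/
def lowPart (k : ℕ) (L : List ℕ) : List ℕ := L.rtakeWhile (· ≤ k)

/-- The subword of the letters larger than `k`, lowered by `k`. -/
def highPart (k : ℕ) (L : List ℕ) : List ℕ := (L.filter (k < ·)).map (· - k)

theorem lowPart_eq_self {k : ℕ} {L : List ℕ} (h : nLetters L ≤ k) : lowPart k L = L :=
  List.rtakeWhile_eq_self_iff.2 fun x hx => decide_eq_true (nLetters_le_iff.1 h x hx)

theorem lowPart_cons_of_lt {k a : ℕ} {L : List ℕ} (h : k < nLetters (a :: L)) :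
    lowPart k (a :: L) = lowPart k L := by
  rw [lowPart, lowPart, List.rtakeWhile, List.rtakeWhile, List.reverse_cons, List.takeWhile_append]
  split_ifs with hlen
  · have hall : ∀ x ∈ L, x ≤ k := by
      simpa using List.takeWhile_eq_self_iff.1 ((List.takeWhile_prefix _).eq_of_length hlen)
    have ha : ¬a ≤ k := fun ha =>
      h.not_ge (nLetters_le_iff.2 (List.forall_mem_cons.2 ⟨ha, hall⟩))
    rw [List.takeWhile_cons_of_neg (by simpa using ha), List.append_nil,
      (List.takeWhile_prefix _).eq_of_length hlen]
  · rfl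

theorem lowPart_suffix (k : ℕ) (L : List ℕ) : lowPart k L <:+ L := List.rtakeWhile_suffix _ _

theorem nLetters_lowPart_le (k : ℕ) (L : List ℕ) : nLetters (lowPart k L) ≤ k :=
  nLetters_le_iff.2 fun _ hx => of_decide_eq_true (List.mem_rtakeWhile_imp (p := (· ≤ k)) hx)

theorem lowPart_sublist_lowPart_cons (k a : ℕ) (L : List ℕ) :
    (lowPart k L).Sublist (lowPart k (a :: L)) := by
  rcases le_or_gt (nLetters (a :: L)) k with h | h
  · rw [lowPart_eq_self h]
    exact (lowPart_suffix k L).sublist.cons a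
  · rw [lowPart_cons_of_lt h]

theorem highPart_cons_of_lt {k a : ℕ} (h : k < a) (L : List ℕ) :
    highPart k (a :: L) = (a - k) :: highPart k L := by
  rw [highPart, List.filter_cons_of_pos (by simpa using h), List.map_cons, highPart]

theorem highPart_cons_of_le {k a : ℕ} (h : a ≤ k) (L : List ℕ) :
    highPart k (a :: L) = highPart k L := by
  rw [highPart, List.filter_cons_of_neg (by simpa using h), highPart]

theorem highPart_append (k : ℕ) (M N : List ℕ) :
    highPart k (M ++ N) = highPart k M ++ highPart k N := by
  rw [highPart, List.filter_append, List.map_append, highPart, highPart]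

theorem highPart_map_add (k : ℕ) (L : List ℕ) :
    (highPart k L).map (· + k) = L.filter (k < ·) := by
  rw [highPart, List.map_map]
  refine (List.map_congr_left fun x hx => ?_).trans (List.map_id _)
  exact Nat.sub_add_cancel (of_decide_eq_true (List.mem_filter.1 hx).2).le

theorem mem_highPart_iff {k x : ℕ} {L : List ℕ} : x ∈ highPart k L ↔ 0 < x ∧ x + k ∈ L := by
  rw [highPart, List.mem_map]
  constructor
  · rintro ⟨y, hy, rfl⟩
    have hky : k < y := of_decide_eq_true (List.mem_filter.1 hy).2
    exact ⟨Nat.sub_pos_of_lt hky, (Nat.sub_add_cancel hky.le).symm ▸ (List.mem_filter.1 hy).1⟩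
  · rintro ⟨hx, hxL⟩
    exact ⟨x + k, List.mem_filter.2 ⟨hxL, by simpa using hx⟩, Nat.add_sub_cancel x k⟩

theorem highPart_eq_nil_iff {k : ℕ} {L : List ℕ} : highPart k L = [] ↔ nLetters L ≤ k := by
  simp only [highPart, List.map_eq_nil_iff, List.filter_eq_nil_iff, decide_eq_true_eq, not_lt,
    nLetters_le_iff]

theorem nLetters_highPart (k : ℕ) (L : List ℕ) : nLetters (highPart k L) = nLetters L - k := by
  induction L with
  | nil => simp [highPart, nLetters]
  | cons a L ih =>
    rcases le_or_gt a k with h | h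
    · rw [highPart_cons_of_le h, ih, nLetters_cons]
      omega
    · rw [highPart_cons_of_lt h, nLetters_cons, nLetters_cons, ih]
      omega

theorem revNC_lowPart {L : List ℕ} (hL : RevNC L) (k : ℕ) : RevNC (lowPart k L) := by
  obtain ⟨M, hM⟩ := lowPart_suffix k L
  exact RevNC.of_append (M := M) (by rwa [hM])

theorem RevNC.nLetters_lowPart {L : List ℕ} (hL : RevNC L) {k : ℕ} (hk : k ≤ nLetters L) :
    nLetters (lowPart k L) = k := by
  induction L with
  | nil => exact (Nat.le_zero.1 hk).symm
  | cons a L ih =>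
    rcases hk.eq_or_lt with rfl | hlt
    · rw [lowPart_eq_self le_rfl]
    · rw [lowPart_cons_of_lt hlt]
      refine ih hL.1 ?_
      have := hL.head_le
      rw [nLetters_cons] at hlt
      omega

theorem sub_mem_visible_highPart {k x : ℕ} {L : List ℕ} (hx : x ∈ visible L) (hk : k < x) :
    x - k ∈ visible (highPart k L) := by
  obtain ⟨M, N, rfl, hM⟩ := mem_visible_iff.1 hx
  refine mem_visible_iff.2 ⟨highPart k M, highPart k N, ?_, fun y hy => ?_⟩
  · rw [highPart_append, highPart_cons_of_lt hk]
  · have := hM _ (mem_highPart_iff.1 hy).2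
    omega

theorem revNC_highPart {L : List ℕ} (hL : RevNC L) (k : ℕ) : RevNC (highPart k L) := by
  induction L with
  | nil => trivial
  | cons a L ih =>
    rcases le_or_gt a k with h | h
    · rw [highPart_cons_of_le h]
      exact ih hL.1
    · rw [highPart_cons_of_lt h]
      refine ⟨ih hL.1, hL.2.imp (fun ha => ?_) fun ha => sub_mem_visible_highPart ha h⟩
      rw [nLetters_highPart]
      omega

theorem RevNC.filter_append_lowPart {L : List ℕ} (hL : RevNC L) {k : ℕ} (hk : k + 1 ∈ visible L) :
    L.filter (k < ·) ++ lowPart k L = L := by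
  induction L with
  | nil => simp [visible] at hk
  | cons a L ih =>
    have hka : k < a := le_of_mem_visible_cons hk
    rw [List.filter_cons_of_pos (by simpa using hka), List.cons_append, lowPart_cons_of_lt
      (hka.trans_le (le_max_left _ _))]
    congr 1
    by_cases hkL : k + 1 ∈ visible L
    · exact ih hL.1 hkL
    · obtain rfl : k + 1 = a := (mem_visible_cons.1 hk).resolve_right fun h => hkL h.1
      obtain hkn : k = nLetters L := Nat.succ_injective (hL.2.resolve_right hkL)
      rw [lowPart_eq_self hkn.ge, List.filter_eq_nil_iff.2, List.nil_append]
      exact fun x hx => by simpa [hkn] using le_nLetters hx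

theorem filter_append_lowPart_sublist (k : ℕ) (L : List ℕ) :
    (L.filter (k < ·) ++ lowPart k L).Sublist L := by
  induction L with
  | nil => simp [lowPart]
  | cons a L ih =>
    rcases le_or_gt (nLetters (a :: L)) k with h | h
    · rw [lowPart_eq_self h, List.filter_eq_nil_iff.2, List.nil_append]
      exact fun x hx => by simpa using nLetters_le_iff.1 h x hx
    · rw [lowPart_cons_of_lt h, List.filter_cons]
      split_ifs
      exacts [ih.cons_cons a, ih.cons a]

theorem RevNC.sublist_lowPart {L u : List ℕ} (hL : RevNC L) {k : ℕ}
    (hu : ((k + 1) :: u).Sublist L) (huk : ∀ x ∈ u, x ≤ k) :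
    u.Sublist (lowPart k L) := by
  induction L with
  | nil => exact absurd hu (by simp)
  | cons a L ih =>
    rcases List.cons_sublist_cons'.1 hu with hu' | ⟨rfl, hu'⟩
    · exact (ih hL.1 hu').trans (lowPart_sublist_lowPart_cons k a L)
    · rw [← hL.filter_append_lowPart (mem_visible_cons.2 (Or.inl rfl))] at hu
      obtain ⟨u₁, u₂, rfl, hu₁, hu₂⟩ :=
        List.sublist_append_iff.1 ((List.sublist_cons_self _ _).trans hu)
      cases u₁ with
      | nil => exact hu₂
      | cons x u₁ =>
        have hkx := (List.mem_filter.1 (hu₁.subset List.mem_cons_self)).2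
        exact absurd (huk x (by simp)) (by simpa using hkx)

theorem patContains_map_iff {w p : List ℕ} {f : ℕ → ℕ} (hf : StrictMono f) :
    PatContains (w.map f) p ↔ PatContains w p := by
  constructor
  · rintro ⟨s, hs, hsp⟩
    obtain ⟨t, ht, rfl⟩ := List.sublist_map_iff.1 hs
    exact ⟨t, ht, (wordOrdIso_map_left hf).1 hsp⟩
  · rintro ⟨s, hs, hsp⟩
    exact ⟨s.map f, hs.map f, (wordOrdIso_map_left hf).2 hsp⟩

theorem patContains_highPart_reverse_iff {k : ℕ} {L p : List ℕ} :
    PatContains (highPart k L).reverse p ↔ PatContains (L.filter (k < ·)).reverse p := by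
  rw [← highPart_map_add, ← List.map_reverse, patContains_map_iff (add_left_strictMono (a := k))]

theorem RevNC.exists_cut {L u v : List ℕ} (hL : RevNC L) (hsub : (v ++ u).Sublist L)
    (huv : ∀ x ∈ u, ∀ y ∈ v, x < y) :
    ∃ k ≤ nLetters L, u.Sublist (lowPart k L) ∧ v.Sublist (L.filter (k < ·)) := by
  rcases eq_or_ne v [] with rfl | hv
  · exact ⟨nLetters L, le_rfl, by rwa [lowPart_eq_self le_rfl], List.nil_sublist _⟩
  · obtain ⟨m, hm, hmin⟩ := v.toFinset.exists_min_image id (List.toFinset_nonempty_iff v |>.2 hv)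
    simp only [List.mem_toFinset, id] at hm hmin
    have hmL : m ∈ L := hsub.subset (List.mem_append_left u hm)
    obtain ⟨k, rfl⟩ := Nat.exists_eq_add_of_le' (hL.pos m hmL)
    have hu : ((k + 1) :: u).Sublist L :=
      ((List.singleton_sublist.2 hm).append (List.Sublist.refl u)).trans hsub
    have hvk : v.filter (k < ·) = v :=
      List.filter_eq_self.2 fun y hy => decide_eq_true (Nat.succ_le_iff.1 (hmin y hy))
    exact ⟨k, (Nat.le_succ k).trans (le_nLetters hmL),
      hL.sublist_lowPart hu fun x hx => Nat.lt_succ_iff.1 (huv x hx _ hm),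
      hvk ▸ ((List.sublist_append_left v u).trans hsub).filter (k < ·)⟩

theorem RevNC.patContains_rgfComp_iff {L a b : List ℕ} (hL : RevNC L) (hb : ∀ x ∈ b, 1 ≤ x) :
    PatContains L.reverse (rgfComp a b) ↔
      ∃ k ≤ nLetters L, PatContains (lowPart k L).reverse a ∧
        PatContains (highPart k L).reverse b := by
  simp only [patContains_highPart_reverse_iff]
  constructor
  · rintro ⟨s, hs, hiso⟩
    obtain ⟨r, t, rfl, hra, htb, hrt⟩ := (wordOrdIso_rgfComp_iff hb).1 hiso
    rw [← List.reverse_sublist, List.reverse_reverse, List.reverse_append] at hs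
    obtain ⟨k, hk, hr, ht⟩ := hL.exists_cut hs (by simpa using hrt)
    exact ⟨k, hk, ⟨r, by simpa using hr.reverse, hra⟩, ⟨t, by simpa using ht.reverse, htb⟩⟩
  · rintro ⟨k, -, ⟨r, hr, hra⟩, ⟨t, ht, htb⟩⟩
    refine ⟨r ++ t, ?_, (wordOrdIso_rgfComp_iff hb).2 ⟨r, t, rfl, hra, htb, fun x hx y hy => ?_⟩⟩
    · refine (hr.append ht).trans ?_
      rw [← List.reverse_append]
      exact (filter_append_lowPart_sublist k L).reverse
    · have hxk := nLetters_le_iff.1 (nLetters_lowPart_le k L) x (List.mem_reverse.1 (hr.subset hx))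
      have hky := (List.mem_filter.1 (List.mem_reverse.1 (ht.subset hy))).2
      exact hxk.trans_lt (of_decide_eq_true hky)

end Cutting

section Components

theorem visible_append (M N : List ℕ) :
    visible (M ++ N) = visible M ∪ {x ∈ visible N | ∀ y ∈ M, x < y} := by
  induction M with
  | nil => simp [visible]
  | cons a M ih =>
    ext x
    rw [List.cons_append, mem_visible_cons, ih, mem_union, mem_union, mem_visible_cons, mem_filter,
      mem_filter, List.forall_mem_cons]
    tauto

theorem visible_map {f : ℕ → ℕ} (hf : StrictMono f) (L : List ℕ) :
    visible (L.map f) = (visible L).image f := by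
  induction L with
  | nil => rfl
  | cons a L ih =>
    rw [List.map_cons, visible, visible, ih, image_insert, filter_image]
    simp only [hf.lt_iff_lt]

theorem rgfComp_reverse (a b : List ℕ) :
    (rgfComp a b).reverse = b.reverse.map (· + nLetters a) ++ a.reverse := by
  rw [rgfComp, List.reverse_append, List.map_reverse]

theorem pos_of_mem_rgfComp {a b : List ℕ} (ha : ∀ x ∈ a, 1 ≤ x) (hb : ∀ x ∈ b, 1 ≤ x) :
    ∀ x ∈ rgfComp a b, 1 ≤ x :=
  List.forall_mem_append.2
    ⟨ha, List.forall_mem_map.2 fun x hx => (hb x hx).trans (Nat.le_add_right x _)⟩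

theorem pos_of_mem_foldr_rgfComp {l : List (List ℕ)} (hl : ∀ c ∈ l, ∀ x ∈ c, 1 ≤ x) :
    ∀ x ∈ l.foldr rgfComp [], 1 ≤ x := by
  induction l with
  | nil => simp
  | cons c l ih =>
    rw [List.forall_mem_cons] at hl
    exact pos_of_mem_rgfComp hl.1 (ih hl.2)

theorem card_visible_rgfComp_reverse (a : List ℕ) {b : List ℕ} (hb : ∀ x ∈ b, 1 ≤ x) :
    #(visible (rgfComp a b).reverse) = #(visible a.reverse) + #(visible b.reverse) := by
  have hlt : ∀ x ∈ visible a.reverse, ∀ y ∈ b.reverse.map (· + nLetters a), x < y := by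
    intro x hx
    rw [List.forall_mem_map]
    intro y hy
    have := le_nLetters (List.mem_reverse.1 (mem_of_mem_visible hx))
    have := hb y (List.mem_reverse.1 hy)
    omega
  have hmono : StrictMono (· + nLetters a) := add_left_strictMono
  rw [rgfComp_reverse, visible_append, filter_true_of_mem hlt, card_union_of_disjoint,
    visible_map hmono, card_image_of_injective _ hmono.injective, Nat.add_comm]
  exact disjoint_right.2 fun x hx hx' => (hlt x hx x (mem_of_mem_visible hx')).false

theorem highPart_map_add_self {L : List ℕ} (hL : ∀ x ∈ L, 1 ≤ x) (k : ℕ) :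
    highPart k (L.map (· + k)) = L := by
  rw [highPart, List.filter_eq_self.2, List.map_map]
  · simp [Function.comp_def]
  · exact List.forall_mem_map.2 fun x hx =>
      decide_eq_true (Nat.lt_add_of_pos_left (Nat.succ_le_iff.1 (hL x hx)))

theorem highPart_rgfComp_reverse (a : List ℕ) {b : List ℕ} (hb : ∀ x ∈ b, 1 ≤ x) :
    highPart (nLetters a) (rgfComp a b).reverse = b.reverse := by
  rw [rgfComp_reverse, highPart_append, highPart_map_add_self (by simpa using hb),
    highPart_eq_nil_iff.2 (nLetters_reverse a).le, List.append_nil]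

theorem revNC_of_rgfComp {a b : List ℕ} (hb : ∀ x ∈ b, 1 ≤ x)
    (h : RevNC (rgfComp a b).reverse) : RevNC a.reverse ∧ RevNC b.reverse := by
  refine ⟨RevNC.of_append (rgfComp_reverse a b ▸ h), ?_⟩
  rw [← highPart_rgfComp_reverse a hb]
  exact revNC_highPart h _

theorem RevNC.reverse_eq_rgfComp {L : List ℕ} (hL : RevNC L) {k : ℕ} (hk : k + 1 ∈ visible L) :
    L.reverse = rgfComp (lowPart k L).reverse (highPart k L).reverse := by
  have hkL : k ≤ nLetters L := (Nat.le_succ k).trans (le_nLetters (mem_of_mem_visible hk))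
  rw [rgfComp, nLetters_reverse, hL.nLetters_lowPart hkL, List.map_reverse, highPart_map_add,
    ← List.reverse_append, hL.filter_append_lowPart hk]

theorem card_visible_eq_one {L : List ℕ} (hL : RevNC L) (hc : Connected L.reverse) :
    #(visible L) = 1 := by
  obtain ⟨hne, hconn⟩ := hc
  obtain ⟨t, M, rfl⟩ := List.exists_cons_of_ne_nil (List.reverse_ne_nil_iff.1 hne)
  refine card_eq_one.2 ⟨t, eq_singleton_iff_unique_mem.2 ⟨mem_insert_self _ _, fun x hx => ?_⟩⟩
  by_contra hxt
  obtain ⟨k, rfl⟩ := Nat.exists_eq_add_of_le' (hL.pos t List.mem_cons_self)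
  have hxk : x ≤ k := by have := le_of_mem_visible_cons hx; omega
  have hk : k + 1 ∈ visible ((k + 1) :: M) := mem_insert_self _ _
  refine hconn ⟨_, _, (revNC_iff.1 (revNC_lowPart hL k)).1, (revNC_iff.1 (revNC_highPart hL k)).1,
    fun hlow => ?_, fun hhigh => ?_, hL.reverse_eq_rgfComp hk⟩
  · have hfilter := hL.filter_append_lowPart hk
    rw [List.reverse_eq_nil_iff.1 hlow, List.append_nil] at hfilter
    have := (List.mem_filter.1 (hfilter.symm ▸ mem_of_mem_visible hx)).2
    exact absurd hxk (of_decide_eq_true this).not_ge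
  · rw [highPart_cons_of_lt (Nat.lt_succ_self k)] at hhigh
    exact List.cons_ne_nil _ _ (List.reverse_eq_nil_iff.1 hhigh)

theorem hasComponents_rgfComp {a b : List ℕ} {p q : ℕ} (ha : HasComponents a p)
    (hb : HasComponents b q) : HasComponents (rgfComp a b) (p + q) := by
  obtain ⟨l, rfl, hl, rfl⟩ := ha
  obtain ⟨m, rfl, hm, rfl⟩ := hb
  refine ⟨l ++ m, List.length_append, List.forall_mem_append.2 ⟨hl, hm⟩, ?_⟩
  clear hl
  induction l with
  | nil => simp [rgfComp, nLetters]
  | cons c l ih => rw [List.foldr_cons, rgfComp_assoc, ih, List.cons_append, List.foldr_cons]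

theorem exists_hasComponents {w : List ℕ} (hw : IsRGF w) : ∃ p, HasComponents w p := by
  induction hn : w.length using Nat.strong_induction_on generalizing w with
  | _ n ih =>
    subst hn
    by_cases hne : w = []
    · exact ⟨0, [], rfl, by simp, hne⟩
    by_cases hconn : Connected w
    · exact ⟨1, [w], rfl, by simp [hw, hconn], (rgfComp_nil_right w).symm⟩
    obtain ⟨a, b, ha, hb, hane, hbne, rfl⟩ := not_not.1 fun h => hconn ⟨hne, h⟩
    rw [rgfComp, List.length_append, List.length_map] at ih
    have := List.length_pos_iff.2 hane
    have := List.length_pos_iff.2 hbne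
    obtain ⟨p, hp⟩ := ih a.length (by omega) ha rfl
    obtain ⟨q, hq⟩ := ih b.length (by omega) hb rfl
    exact ⟨p + q, hasComponents_rgfComp hp hq⟩

theorem card_visible_of_hasComponents {w : List ℕ} {p : ℕ} (h : HasComponents w p)
    (hw : RevNC w.reverse) : #(visible w.reverse) = p := by
  obtain ⟨l, rfl, hl, rfl⟩ := h
  induction l with
  | nil => rfl
  | cons c l ih =>
    rw [List.forall_mem_cons] at hl
    have hpos : ∀ x ∈ l.foldr rgfComp [], 1 ≤ x :=
      pos_of_mem_foldr_rgfComp fun c hc => (hl.2 c hc).1.1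
    obtain ⟨hc, hrest⟩ := revNC_of_rgfComp hpos hw
    rw [List.foldr_cons, card_visible_rgfComp_reverse c hpos, ih hl.2 hrest, card_visible_eq_one hc
      (by simpa using hl.1.2), List.length_cons, Nat.add_comm]

theorem hasComponents_iff {w : List ℕ} (hw : RevNC w.reverse) {p : ℕ} :
    HasComponents w p ↔ #(visible w.reverse) = p := by
  refine ⟨fun h => card_visible_of_hasComponents h hw, ?_⟩
  rintro rfl
  obtain ⟨p, hp⟩ := exists_hasComponents (w := w) (by simpa using (revNC_iff.1 hw).1)
  rwa [card_visible_of_hasComponents hp hw]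

end Components

section Returns

/-- The returns of a reversed word to its letters at most `k`: for each such letter written after a
letter larger than `k`, the letter itself paired with the last larger letter before it, lowered by
`k`. Together with `lowPart` and `highPart` they determine a non-crossing word. -/
def returnPairs (k : ℕ) : List ℕ → List (ℕ × ℕ)
  | [] => []
  | a :: L => if k < a then returnPairs k L else
    match highPart k L with
    | [] => []
    | y :: _ => (a, y) :: returnPairs k L

/-- The lists of pairs in `S × T` which, from head to tail, increase weakly in the first entry and
decrease weakly in the second. -/
def IsReturnChain (S T : Finset ℕ) (C : List (ℕ × ℕ)) : Prop :=
  (∀ c ∈ C, c.1 ∈ S ∧ c.2 ∈ T) ∧ C.Pairwise fun c d => c.1 ≤ d.1 ∧ d.2 ≤ c.2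

theorem returnPairs_cons_of_lt {k a : ℕ} (h : k < a) (L : List ℕ) :
    returnPairs k (a :: L) = returnPairs k L := by
  rw [returnPairs, if_pos h]

theorem returnPairs_eq_nil {k : ℕ} {L : List ℕ} (h : nLetters L ≤ k) : returnPairs k L = [] := by
  cases L with
  | nil => rfl
  | cons a L =>
    rw [nLetters_cons, max_le_iff] at h
    rw [returnPairs, if_neg h.1.not_gt, highPart_eq_nil_iff.2 h.2]

theorem returnPairs_cons_of_highPart {k a y : ℕ} {L Y : List ℕ} (ha : a ≤ k)
    (hY : highPart k L = y :: Y) : returnPairs k (a :: L) = (a, y) :: returnPairs k L := by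
  rw [returnPairs, if_neg ha.not_gt, hY]

theorem lt_nLetters_of_highPart {k y : ℕ} {L Y : List ℕ} (hY : highPart k L = y :: Y) :
    k < nLetters L :=
  not_le.1 fun h => List.cons_ne_nil _ _ (hY.symm.trans (highPart_eq_nil_iff.2 h))

@[elab_as_elim]
theorem cut_induction (k : ℕ) {motive : List ℕ → Prop} (low : ∀ L, nLetters L ≤ k → motive L)
    (high : ∀ a L, k < a → motive L → motive (a :: L))
    (ret : ∀ a L y Y, a ≤ k → highPart k L = y :: Y → motive L → motive (a :: L)) (L : List ℕ) :
    motive L := by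
  induction L with
  | nil => exact low [] (Nat.zero_le k)
  | cons a L ih =>
    rcases lt_or_ge k a with ha | ha
    · exact high a L ha ih
    · cases hY : highPart k L with
      | nil => exact low _ (max_le ha (highPart_eq_nil_iff.1 hY))
      | cons y Y => exact ret a L y Y ha hY ih

theorem length_eq_add_returnPairs (k : ℕ) (L : List ℕ) :
    L.length = (lowPart k L).length + (highPart k L).length + (returnPairs k L).length := by
  induction L using cut_induction k with
  | low L hL => rw [lowPart_eq_self hL, highPart_eq_nil_iff.2 hL, returnPairs_eq_nil hL]; rfl
  | high a L ha ih =>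
    rw [lowPart_cons_of_lt (ha.trans_le (le_max_left _ _)), highPart_cons_of_lt ha,
      returnPairs_cons_of_lt ha, List.length_cons, List.length_cons, ih]
    omega
  | ret a L y Y ha hY ih =>
    rw [lowPart_cons_of_lt ((lt_nLetters_of_highPart hY).trans_le (le_max_right _ _)),
      highPart_cons_of_le ha, returnPairs_cons_of_highPart ha hY, List.length_cons,
      List.length_cons, ih]
    omega

theorem snd_mem_of_mem_returnPairs {k : ℕ} {L : List ℕ} :
    ∀ c ∈ returnPairs k L, c.2 ∈ highPart k L := by
  induction L using cut_induction k with
  | low L hL => simp [returnPairs_eq_nil hL]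
  | high a L ha ih =>
    rw [returnPairs_cons_of_lt ha, highPart_cons_of_lt ha]
    exact fun c hc => List.mem_cons_of_mem _ (ih c hc)
  | ret a L y Y ha hY ih =>
    rw [returnPairs_cons_of_highPart ha hY, highPart_cons_of_le ha, List.forall_mem_cons]
    exact ⟨by simp [hY], ih⟩

/-- The last high letter before a return stays below all later high letters, so a high letter is
hidden by the returns exactly when one of them came after it. -/
theorem mem_visible_iff_highPart {k x : ℕ} {L : List ℕ} (hL : RevNC L) (hx : k < x) :
    x ∈ visible L ↔ x - k ∈ visible (highPart k L) ∧ ∀ c ∈ returnPairs k L, c.2 < x - k := by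
  induction L using cut_induction k generalizing x with
  | low L hLk =>
    rw [highPart_eq_nil_iff.2 hLk]
    exact iff_of_false (fun h => (le_nLetters (mem_of_mem_visible h)).not_gt (hLk.trans_lt hx))
      (by simp [visible])
  | high a L ha ih =>
    have hlast : ∀ c ∈ returnPairs k L, c.2 < a - k := fun c hc => by
      rcases hL.2 with rfl | haL
      · have := le_nLetters (snd_mem_of_mem_returnPairs c hc)
        rw [nLetters_highPart] at this
        omega
      · exact ((ih hL.1 ha).1 haL).2 c hc
    rw [highPart_cons_of_lt ha, returnPairs_cons_of_lt ha, mem_visible_cons, mem_visible_cons,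
      ih hL.1 hx]
    constructor
    · rintro (rfl | ⟨⟨hvis, hC⟩, hxa⟩)
      exacts [⟨Or.inl rfl, hlast⟩, ⟨Or.inr ⟨hvis, Nat.sub_lt_sub_right hx.le hxa⟩, hC⟩]
    · rintro ⟨hxa | ⟨hvis, hxa⟩, hC⟩
      exacts [Or.inl (by omega), Or.inr ⟨⟨hvis, hC⟩, by omega⟩]
  | ret a L y Y ha hY _ =>
    rw [highPart_cons_of_le ha, returnPairs_cons_of_highPart ha hY]
    refine iff_of_false (fun h => (le_of_mem_visible_cons h).not_gt (ha.trans_lt hx)) ?_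
    rintro ⟨hvis, hC⟩
    rw [hY] at hvis
    exact (le_of_mem_visible_cons hvis).not_gt (List.forall_mem_cons.1 hC).1

theorem RevNC.mem_visible_of_le {a : ℕ} {L : List ℕ} (hL : RevNC (a :: L)) (ha : a ≤ nLetters L) :
    a ∈ visible L :=
  hL.2.resolve_left (ha.trans_lt (Nat.lt_succ_self _)).ne

theorem mem_visible_iff_lowPart {k x : ℕ} {L : List ℕ} (hL : RevNC L) (hx : x ≤ k) :
    x ∈ visible L ↔ x ∈ visible (lowPart k L) ∧ ∀ c ∈ returnPairs k L, x ≤ c.1 := by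
  induction L using cut_induction k with
  | low L hLk => simp [lowPart_eq_self hLk, returnPairs_eq_nil hLk]
  | high a L ha ih =>
    rw [lowPart_cons_of_lt (ha.trans_le (le_max_left _ _)), returnPairs_cons_of_lt ha,
      mem_visible_cons, ← ih hL.1]
    have hxa := hx.trans_lt ha
    exact ⟨fun h => (h.resolve_left hxa.ne).1, fun h => Or.inr ⟨h, hxa⟩⟩
  | ret a L y Y ha hY ih =>
    have hkL := lt_nLetters_of_highPart hY
    rw [lowPart_cons_of_lt (hkL.trans_le (le_max_right _ _)), returnPairs_cons_of_highPart ha hY,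
      mem_visible_cons, List.forall_mem_cons, and_left_comm, ← ih hL.1]
    have haL := hL.mem_visible_of_le (ha.trans hkL.le)
    constructor
    · rintro (rfl | ⟨hvis, hxa⟩)
      exacts [⟨le_rfl, haL⟩, ⟨hxa.le, hvis⟩]
    · rintro ⟨hxa, hvis⟩
      exact hxa.eq_or_lt.imp_right fun hlt => ⟨hvis, hlt⟩

theorem isReturnChain_returnPairs {k : ℕ} {L : List ℕ} (hL : RevNC L) :
    IsReturnChain (visible (lowPart k L)) (visible (highPart k L)) (returnPairs k L) := by
  induction L using cut_induction k with
  | low L hLk => simp [IsReturnChain, returnPairs_eq_nil hLk]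
  | high a L ha ih =>
    have hlast := ((mem_visible_iff_highPart hL ha).1 (mem_visible_cons.2 (Or.inl rfl))).2
    rw [returnPairs_cons_of_lt ha] at hlast ⊢
    rw [lowPart_cons_of_lt (ha.trans_le (le_max_left _ _)), highPart_cons_of_lt ha]
    obtain ⟨hmem, hpair⟩ := ih hL.1
    exact ⟨fun c hc => ⟨(hmem c hc).1, mem_visible_cons.2 (Or.inr ⟨(hmem c hc).2, hlast c hc⟩)⟩,
      hpair⟩
  | ret a L y Y ha hY ih =>
    have hkL := lt_nLetters_of_highPart hY
    have haL := (mem_visible_iff_lowPart hL.1 ha).1 (hL.mem_visible_of_le (ha.trans hkL.le))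
    rw [returnPairs_cons_of_highPart ha hY, highPart_cons_of_le ha,
      lowPart_cons_of_lt (hkL.trans_le (le_max_right _ _))]
    obtain ⟨hmem, hpair⟩ := ih hL.1
    rw [hY] at hmem ⊢
    exact ⟨List.forall_mem_cons.2 ⟨⟨haL.1, mem_visible_cons.2 (Or.inl rfl)⟩, hmem⟩,
      List.pairwise_cons.2 ⟨fun c hc => ⟨haL.2 c hc, le_of_mem_visible_cons (hmem c hc).2⟩, hpair⟩⟩

end Returns

section CutBijection

/-- Cutting a word into its letters before the first letter larger than `k`, its letters larger than
`k`, and its returns. -/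
def cut (k : ℕ) (L : List ℕ) : List ℕ × List ℕ × List (ℕ × ℕ) :=
  (lowPart k L, highPart k L, returnPairs k L)

theorem cut_eq_of_le {k : ℕ} {L : List ℕ} (h : nLetters L ≤ k) : cut k L = (L, [], []) := by
  rw [cut, lowPart_eq_self h, highPart_eq_nil_iff.2 h, returnPairs_eq_nil h]

theorem cut_cons_of_lt {k a : ℕ} (ha : k < a) (L : List ℕ) :
    cut k (a :: L) = ((cut k L).1, (a - k) :: (cut k L).2.1, (cut k L).2.2) := by
  rw [cut, lowPart_cons_of_lt (ha.trans_le (le_max_left _ _)), highPart_cons_of_lt ha,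
    returnPairs_cons_of_lt ha, cut]

theorem cut_cons_of_highPart {k a y : ℕ} {L Y : List ℕ} (ha : a ≤ k)
    (hY : highPart k L = y :: Y) :
    cut k (a :: L) = ((cut k L).1, (cut k L).2.1, (a, y) :: (cut k L).2.2) := by
  rw [cut, lowPart_cons_of_lt ((lt_nLetters_of_highPart hY).trans_le (le_max_right _ _)),
    highPart_cons_of_le ha, returnPairs_cons_of_highPart ha hY, cut]

/-- A last letter larger than `k` exceeds all returns, while a return records the last high letter;
so the cut shows which of the two cases occurs. -/
theorem cut_injOn (k : ℕ) : Set.InjOn (cut k) {L | RevNC L} := by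
  have hnot : ∀ {a a' L L' y Y}, RevNC (a :: L) → k < a → a' ≤ k → highPart k L' = y :: Y →
      cut k (a :: L) ≠ cut k (a' :: L') := by
    intro a a' L L' y Y hL ha ha' hY h
    have hlast := ((mem_visible_iff_highPart hL ha).1 (mem_visible_cons.2 (Or.inl rfl))).2
    rw [returnPairs_cons_of_lt ha] at hlast
    rw [cut_cons_of_lt ha, cut_cons_of_highPart ha' hY] at h
    simp only [cut, hY, Prod.mk.injEq, List.cons.injEq] at h
    have := hlast (a', y) (h.2.2 ▸ List.mem_cons_self)
    omega
  intro L
  induction L using cut_induction k with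
  | low L hLk =>
    intro _ L' _ h
    rw [cut_eq_of_le hLk] at h
    have hhigh : highPart k L' = [] := (congrArg (·.2.1) h).symm
    rw [cut_eq_of_le (highPart_eq_nil_iff.1 hhigh), Prod.mk.injEq] at h
    exact h.1
  | high a L ha ih =>
    intro hL L' hL' h
    induction L' using cut_induction k with
    | low L' hLk' => rw [cut_cons_of_lt ha, cut_eq_of_le hLk'] at h; simp at h
    | high a' L' ha' _ =>
      rw [cut_cons_of_lt ha, cut_cons_of_lt ha', Prod.mk.injEq, Prod.mk.injEq, List.cons.injEq] at h
      rw [ih hL.1 hL'.1 (Prod.ext h.1 (Prod.ext h.2.1.2 h.2.2)), show a = a' by omega]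
    | ret a' L' y Y ha' hY _ => exact absurd h (hnot hL ha ha' hY)
  | ret a L y Y ha hY ih =>
    intro hL L' hL' h
    induction L' using cut_induction k with
    | low L' hLk' => rw [cut_cons_of_highPart ha hY, cut_eq_of_le hLk'] at h; simp at h
    | high a' L' ha' _ => exact absurd h.symm (hnot hL' ha' ha hY)
    | ret a' L' y' Y' ha' hY' _ => 
      rw [cut_cons_of_highPart ha hY, cut_cons_of_highPart ha' hY', Prod.mk.injEq, Prod.mk.injEq,
        List.cons.injEq, Prod.mk.injEq] at h
      rw [ih hL.1 hL'.1 (Prod.ext h.1 (Prod.ext h.2.1 h.2.2.2)), h.2.2.1.1]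

theorem RevNC.exists_cons_high {k y : ℕ} {L : List ℕ} (hL : RevNC L) (hk : k ≤ nLetters L)
    (hY : RevNC (y :: highPart k L)) (hC : ∀ c ∈ returnPairs k L, c.2 < y) :
    ∃ L', RevNC L' ∧ k ≤ nLetters L' ∧
      cut k L' = (lowPart k L, y :: highPart k L, returnPairs k L) := by
  have hy : k < y + k := Nat.lt_add_of_pos_left (hY.pos y List.mem_cons_self)
  refine ⟨(y + k) :: L, ⟨hL, ?_⟩, hk.trans (le_max_right _ _), ?_⟩
  · refine hY.2.imp (fun hnew => ?_) fun hvis => ?_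
    · rw [hnew, nLetters_highPart]
      omega
    · rw [mem_visible_iff_highPart hL hy, Nat.add_sub_cancel]
      exact ⟨hvis, hC⟩
  · rw [cut_cons_of_lt hy, Nat.add_sub_cancel, cut]

theorem RevNC.exists_cons_return {k a y : ℕ} {L Y : List ℕ} (hL : RevNC L) (hk : k ≤ nLetters L)
    (hY : highPart k L = y :: Y) (ha : a ∈ visible (lowPart k L))
    (hC : ∀ c ∈ returnPairs k L, a ≤ c.1) :
    ∃ L', RevNC L' ∧ k ≤ nLetters L' ∧
      cut k L' = (lowPart k L, highPart k L, (a, y) :: returnPairs k L) := by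
  have hak : a ≤ k := (le_nLetters (mem_of_mem_visible ha)).trans (nLetters_lowPart_le k L)
  exact ⟨a :: L, ⟨hL, Or.inr ((mem_visible_iff_lowPart hL hak).2 ⟨ha, hC⟩)⟩,
    hk.trans (le_max_right _ _), cut_cons_of_highPart hak hY⟩

theorem IsReturnChain.of_cons {S : Finset ℕ} {y : ℕ} {Y : List ℕ} {C : List (ℕ × ℕ)}
    (hC : IsReturnChain S (visible (y :: Y)) C) (hy : ∀ c ∈ C, c.2 < y) :
    IsReturnChain S (visible Y) C :=
  ⟨fun c hc => ⟨(hC.1 c hc).1,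
    ((mem_visible_cons.1 (hC.1 c hc).2).resolve_left (hy c hc).ne).1⟩, hC.2⟩

theorem exists_cut_eq {X : List ℕ} (hX : RevNC X) {Y : List ℕ} (hY : RevNC Y)
    {C : List (ℕ × ℕ)} (hC : IsReturnChain (visible X) (visible Y) C) :
    ∃ L, RevNC L ∧ nLetters X ≤ nLetters L ∧ cut (nLetters X) L = (X, Y, C) := by
  induction Y generalizing C with
  | nil =>
    obtain rfl : C = [] := List.eq_nil_iff_forall_not_mem.2 fun c hc => by
      simpa [visible] using (hC.1 c hc).2
    exact ⟨X, hX, le_rfl, cut_eq_of_le le_rfl⟩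
  | cons y Y ihY =>
    induction C with
    | nil =>
      obtain ⟨L, hL, hk, hcut⟩ := ihY hY.1 (hC.of_cons (by simp))
      simp only [cut, Prod.mk.injEq] at hcut
      obtain ⟨hlow, rfl, hret⟩ := hcut
      simpa only [hlow, hret] using hL.exists_cons_high hk hY (by simp [hret])
    | cons c C ihC =>
      obtain ⟨a, t⟩ := c
      obtain ⟨⟨ha, ht⟩, hmem⟩ := List.forall_mem_cons.1 hC.1
      obtain ⟨hle, hpair⟩ := List.pairwise_cons.1 hC.2
      rcases (le_of_mem_visible_cons ht).lt_or_eq with hlt | rfl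
      · have hCy : ∀ c ∈ (a, t) :: C, c.2 < y :=
          List.forall_mem_cons.2 ⟨hlt, fun c hc => (hle c hc).2.trans_lt hlt⟩
        obtain ⟨L, hL, hk, hcut⟩ := ihY hY.1 (hC.of_cons hCy)
        simp only [cut, Prod.mk.injEq] at hcut
        obtain ⟨hlow, rfl, hret⟩ := hcut
        rw [← hret] at hCy
        simpa only [hlow, hret] using hL.exists_cons_high hk hY hCy
      · obtain ⟨L, hL, hk, hcut⟩ := ihC ⟨hmem, hpair⟩
        simp only [cut, Prod.mk.injEq] at hcut
        obtain ⟨hlow, hhigh, rfl⟩ := hcut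
        rw [← hlow] at ha
        simpa only [hlow, hhigh] using
          hL.exists_cons_return hk hhigh ha fun c hc => (hle c hc).1

end CutBijection

section Rank

variable {α : Type*} (r : α → α → Prop) [DecidableRel r] (S : Finset α)

/-- The number of elements of `S` preceding `x` in the order `r`. -/
def rank (x : α) : ℕ := #{s ∈ S | r s x}

variable {r S} [IsStrictTotalOrder α r]

theorem rank_lt_rank {x y : α} (hx : x ∈ S) (hxy : r x y) : rank r S x < rank r S y := by
  refine card_lt_card (ssubset_iff_of_subset (monotone_filter_right S fun s _ hs =>
    _root_.trans hs hxy) |>.2 ⟨x, mem_filter.2 ⟨hx, hxy⟩, fun h => ?_⟩)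
  exact irrefl x (mem_filter.1 h).2

theorem rank_le_rank_iff {x y : α} (hx : x ∈ S) (hy : y ∈ S) :
    rank r S x ≤ rank r S y ↔ x = y ∨ r x y := by
  constructor
  · intro h
    rcases trichotomous_of r x y with hxy | hxy | hxy
    exacts [Or.inr hxy, Or.inl hxy, absurd h (rank_lt_rank hy hxy).not_ge]
  · rintro (rfl | hxy)
    exacts [le_rfl, (rank_lt_rank hx hxy).le]

variable (r S) in
theorem bijOn_rank : Set.BijOn (rank r S) S (Set.Iio #S) := by
  rw [← coe_range]
  have hmaps : Set.MapsTo (rank r S) S (range #S) := fun x hx =>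
    mem_coe.2 <| mem_range.2 <| card_lt_card <| filter_ssubset.2 ⟨x, hx, irrefl x⟩
  have hinj : Set.InjOn (rank r S) S := fun x hx y hy hxy => by
    by_contra hne
    rcases trichotomous_of r x y with h | h | h
    exacts [(rank_lt_rank hx h).ne hxy, hne h, (rank_lt_rank hy h).ne' hxy]
  exact ⟨hmaps, hinj, surjOn_of_injOn_of_card_le _ hmaps hinj (card_range _).le⟩

theorem card_filter_eq_or_rel {x : α} [DecidableEq α] (hx : x ∈ S) :
    #{s ∈ S | s = x ∨ r s x} = rank r S x + 1 := by
  rw [rank, ← card_insert_of_notMem (s := {s ∈ S | r s x}) (a := x) fun h =>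
    irrefl x (mem_filter.1 h).2]
  congr 1
  ext s
  simp only [mem_filter, mem_insert]
  constructor
  · rintro ⟨hs, rfl | h⟩
    exacts [Or.inl rfl, Or.inr ⟨hs, h⟩]
  · rintro (rfl | ⟨hs, h⟩)
    exacts [⟨hx, Or.inl rfl⟩, ⟨hs, Or.inr h⟩]

end Rank

section Staircases

theorem bijOn_map_pairwise {α β : Type*} [Nonempty α] {f : α → β} {s : Set α} {t : Set β}
    {r : α → α → Prop} {r' : β → β → Prop} (hf : Set.BijOn f s t)
    (hr : ∀ x ∈ s, ∀ y ∈ s, r x y ↔ r' (f x) (f y)) :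
    Set.BijOn (List.map f) {l | (∀ x ∈ l, x ∈ s) ∧ l.Pairwise r}
      {l | (∀ y ∈ l, y ∈ t) ∧ l.Pairwise r'} := by
  have hpair : ∀ l : List α, (∀ x ∈ l, x ∈ s) → (l.Pairwise r ↔ (l.map f).Pairwise r') := by
    intro l hl
    rw [List.pairwise_map]
    exact List.Pairwise.iff_of_mem fun hx hy => hr _ (hl _ hx) _ (hl _ hy)
  obtain ⟨hleft, hright⟩ := hf.invOn_invFunOn
  have hmap_left : ∀ l : List α, (∀ x ∈ l, x ∈ s) → (l.map f).map (Function.invFunOn f s) = l :=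
    fun l hl => by
      rw [List.map_map]
      exact (List.map_congr_left fun x hx => hleft (hl x hx)).trans (List.map_id l)
  have hmap_right : ∀ l : List β, (∀ y ∈ l, y ∈ t) → (l.map (Function.invFunOn f s)).map f = l :=
    fun l hl => by
      rw [List.map_map]
      exact (List.map_congr_left fun y hy => hright (hl y hy)).trans (List.map_id l)
  refine Set.InvOn.bijOn ⟨fun l hl => hmap_left l hl.1, fun l hl => hmap_right l hl.1⟩
    (fun l hl => ⟨List.forall_mem_map.2 fun x hx => hf.mapsTo (hl.1 x hx),
      (hpair l hl.1).1 hl.2⟩) fun l hl => ?_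
  have hmem : ∀ x ∈ l.map (Function.invFunOn f s), x ∈ s :=
    List.forall_mem_map.2 fun y hy => hf.surjOn.mapsTo_invFunOn (hl.1 y hy)
  exact ⟨hmem, (hpair _ hmem).2 ((hmap_right l hl.1).symm ▸ hl.2)⟩

/-- The sequences of lattice points of the rectangle `[0, a) × [0, b)` that increase weakly in both
coordinates. -/
def IsStaircase (a b : ℕ) (D : List (ℕ × ℕ)) : Prop :=
  (∀ d ∈ D, d.1 < a ∧ d.2 < b) ∧ D.Pairwise (· ≤ ·)

/-- The number of visible letters of a word whose low and high parts have `a` and `b` of them and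
whose returns form the staircase `D`. -/
def stairHeight (a b : ℕ) : List (ℕ × ℕ) → ℕ
  | [] => a + b
  | d :: _ => d.1 + 1 + d.2

/-- The position of a return, given by the rank of its first entry from below in `S` and of its
second entry from above in `T`; return chains become staircases. -/
def returnRank (S T : Finset ℕ) : ℕ × ℕ → ℕ × ℕ := Prod.map (rank (· < ·) S) (rank (· > ·) T)

theorem bijOn_map_returnRank (S T : Finset ℕ) :
    Set.BijOn (List.map (returnRank S T)) {C | IsReturnChain S T C} {D | IsStaircase #S #T D} := by
  have hpt : Set.BijOn (returnRank S T) {c | c.1 ∈ S ∧ c.2 ∈ T} {d | d.1 < #S ∧ d.2 < #T} :=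
    (bijOn_rank (· < ·) S).prodMap (bijOn_rank (· > ·) T)
  refine bijOn_map_pairwise hpt fun c hc d hd => ?_
  rw [Prod.le_def, returnRank, Prod.map_fst, Prod.map_fst, Prod.map_snd, Prod.map_snd,
    rank_le_rank_iff hc.1 hd.1, rank_le_rank_iff hc.2 hd.2, le_iff_eq_or_lt, le_iff_eq_or_lt,
    eq_comm (a := c.2)]

theorem card_filter_visible_le {k : ℕ} {L : List ℕ} (hL : RevNC L) :
    #{x ∈ visible L | x ≤ k} =
      #{x ∈ visible (lowPart k L) | ∀ c ∈ returnPairs k L, x ≤ c.1} := by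
  congr 1
  ext x
  simp only [mem_filter]
  constructor
  · exact fun h => (mem_visible_iff_lowPart hL h.2).1 h.1
  · intro h
    have hxk := (le_nLetters (mem_of_mem_visible h.1)).trans (nLetters_lowPart_le k L)
    exact ⟨(mem_visible_iff_lowPart hL hxk).2 h, hxk⟩

theorem card_filter_lt_visible {k : ℕ} {L : List ℕ} (hL : RevNC L) :
    #{x ∈ visible L | k < x} =
      #{z ∈ visible (highPart k L) | ∀ c ∈ returnPairs k L, c.2 < z} := by
  refine card_nbij' (· - k) (· + k) (fun x hx => ?_) (fun z hz => ?_) (fun x hx => ?_) fun z _ =>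
    Nat.add_sub_cancel z k
  · obtain ⟨hx, hkx⟩ := mem_filter.1 (mem_coe.1 hx)
    exact mem_coe.2 (mem_filter.2 ((mem_visible_iff_highPart hL hkx).1 hx))
  · have hz' := mem_filter.1 (mem_coe.1 hz)
    have hkz : k < z + k :=
      Nat.lt_add_of_pos_left (mem_highPart_iff.1 (mem_of_mem_visible hz'.1)).1
    refine mem_coe.2 (mem_filter.2 ⟨(mem_visible_iff_highPart hL hkz).2 ?_, hkz⟩)
    rwa [Nat.add_sub_cancel]
  · exact Nat.sub_add_cancel (mem_filter.1 (mem_coe.1 hx)).2.le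

theorem card_visible_eq_stairHeight (k : ℕ) {L : List ℕ} (hL : RevNC L) :
    #(visible L) = stairHeight #(visible (lowPart k L)) #(visible (highPart k L))
      ((returnPairs k L).map
        (returnRank (visible (lowPart k L)) (visible (highPart k L)))) := by
  obtain ⟨hmem, hpair⟩ := isReturnChain_returnPairs hL (k := k)
  rw [← card_filter_add_card_filter_not (· ≤ k), card_filter_visible_le hL]
  simp only [not_le]
  rw [card_filter_lt_visible hL]
  cases hC : returnPairs k L with
  | nil => simp [stairHeight]
  | cons c C =>
    rw [hC] at hmem hpair
    obtain ⟨hc, -⟩ := List.forall_mem_cons.1 hmem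
    obtain ⟨hle, -⟩ := List.pairwise_cons.1 hpair
    have hlow : ∀ x, (∀ d ∈ c :: C, x ≤ d.1) ↔ x = c.1 ∨ x < c.1 := fun x => by
      rw [List.forall_mem_cons, ← le_iff_eq_or_lt]
      exact and_iff_left_of_imp fun hx d hd => hx.trans (hle d hd).1
    have hhigh : ∀ z, (∀ d ∈ c :: C, d.2 < z) ↔ z > c.2 := fun z => by
      rw [List.forall_mem_cons]
      exact and_iff_left_of_imp fun hz d hd => (hle d hd).2.trans_lt hz
    simp only [hlow, hhigh, card_filter_eq_or_rel hc.1]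
    rfl

end Staircases

section Gluing

/-- The statistic behind cc-equivalence: by `hasComponents_iff` the visible letters count the
components. -/
def weight (L : List ℕ) : ℕ × ℕ := (L.length, #(visible L))

/-- The words of `RevNC` with a distinguished cut into a low part in `A` and a high part in `B`. -/
def splits (A B : Set (List ℕ)) : Set (List ℕ × ℕ) :=
  {c | RevNC c.1 ∧ c.2 ≤ nLetters c.1 ∧ lowPart c.2 c.1 ∈ A ∧ highPart c.2 c.1 ∈ B}

/-- The data from which the words of `splits A B` are glued. -/
def gluings (A B : Set (List ℕ)) : Set (List ℕ × List ℕ × List (ℕ × ℕ)) :=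
  {g | g.1 ∈ A ∧ g.2.1 ∈ B ∧ IsStaircase #(visible g.1) #(visible g.2.1) g.2.2}

/-- The weight of a glued word. -/
def gluingWeight (g : List ℕ × List ℕ × List (ℕ × ℕ)) : ℕ × ℕ :=
  (g.1.length + g.2.1.length + g.2.2.length,
    stairHeight #(visible g.1) #(visible g.2.1) g.2.2)

/-- The parts of a split word and its returns, recorded as a staircase. -/
def splitParts (c : List ℕ × ℕ) : List ℕ × List ℕ × List (ℕ × ℕ) :=
  (lowPart c.2 c.1, highPart c.2 c.1, (returnPairs c.2 c.1).map
    (returnRank (visible (lowPart c.2 c.1)) (visible (highPart c.2 c.1))))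

variable {A A' B B' : Set (List ℕ)}

theorem bijOn_splitParts (hA : A ⊆ {L | RevNC L}) (hB : B ⊆ {L | RevNC L}) :
    Set.BijOn splitParts (splits A B) (gluings A B) := by
  refine ⟨?_, ?_, ?_⟩
  · rintro ⟨w, k⟩ ⟨hw, -, hlow, hhigh⟩
    exact ⟨hlow, hhigh, (bijOn_map_returnRank _ _).mapsTo (isReturnChain_returnPairs hw)⟩
  · rintro ⟨w, k⟩ ⟨hw, hk, -⟩ ⟨w', k'⟩ ⟨hw', hk', -⟩ h
    obtain ⟨hlow, hhigh, hret⟩ : lowPart k w = lowPart k' w' ∧ highPart k w = highPart k' w' ∧ _ :=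
      by simpa only [splitParts, Prod.mk.injEq] using h
    obtain rfl : k = k' :=
      (hw.nLetters_lowPart hk).symm.trans (hlow ▸ hw'.nLetters_lowPart hk')
    rw [hlow, hhigh] at hret
    have hchain := hlow ▸ hhigh ▸ isReturnChain_returnPairs hw (k := k)
    have hret' := (bijOn_map_returnRank _ _).injOn hchain (isReturnChain_returnPairs hw') hret
    exact Prod.ext (cut_injOn k hw hw' (Prod.ext hlow (Prod.ext hhigh hret'))) rfl
  · rintro ⟨X, Y, D⟩ ⟨hX, hY, hD⟩
    obtain ⟨C, hC, rfl : C.map (returnRank (visible X) (visible Y)) = D⟩ :=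
      (bijOn_map_returnRank _ _).surjOn hD
    obtain ⟨L, hL, hk, hcut⟩ := exists_cut_eq (hA hX) (hB hY) hC
    simp only [cut, Prod.mk.injEq] at hcut
    obtain ⟨hlow, hhigh, hret⟩ := hcut
    exact ⟨(L, nLetters X), ⟨hL, hk, hlow.symm ▸ hX, hhigh.symm ▸ hY⟩,
      by simp only [splitParts, hlow, hhigh, hret]⟩

theorem equidistributed_splits_gluings (hA : A ⊆ {L | RevNC L}) (hB : B ⊆ {L | RevNC L}) :
    Equidistributed (splits A B) (weight ∘ Prod.fst) (gluings A B) gluingWeight :=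
  .of_bijOn (bijOn_splitParts hA hB) fun c hc => Prod.ext
    (by simp only [gluingWeight, splitParts, List.length_map, Function.comp_apply, weight,
      length_eq_add_returnPairs c.2 c.1])
    (card_visible_eq_stairHeight c.2 hc.1).symm

theorem IsStaircase.map_swap {a b : ℕ} {D : List (ℕ × ℕ)} (hD : IsStaircase a b D) :
    IsStaircase b a (D.map Prod.swap) :=
  ⟨List.forall_mem_map.2 fun d hd => (hD.1 d hd).symm,
    List.pairwise_map.2 (hD.2.imp fun h => Prod.swap_le_swap.2 h)⟩

theorem stairHeight_map_swap (a b : ℕ) (D : List (ℕ × ℕ)) :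
    stairHeight b a (D.map Prod.swap) = stairHeight a b D := by
  cases D with
  | nil => exact Nat.add_comm b a
  | cons d D => simp only [List.map_cons, stairHeight, Prod.fst_swap, Prod.snd_swap]; omega

theorem equidistributed_gluings_swap (A B : Set (List ℕ)) :
    Equidistributed (gluings A B) gluingWeight (gluings B A) gluingWeight := by
  have hmaps : ∀ A B : Set (List ℕ), Set.MapsTo (fun g : List ℕ × List ℕ × List (ℕ × ℕ) =>
      (g.2.1, g.1, g.2.2.map Prod.swap)) (gluings A B) (gluings B A) :=
    fun A B g hg => ⟨hg.2.1, hg.1, hg.2.2.map_swap⟩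
  have hinv : ∀ D : List (ℕ × ℕ), (D.map Prod.swap).map Prod.swap = D := fun D => by simp
  refine .of_bijOn (Set.InvOn.bijOn ⟨fun g _ => ?_, fun g _ => ?_⟩ (hmaps A B) (hmaps B A))
    fun g _ => ?_
  · simp only [hinv]
  · simp only [hinv]
  · simp only [gluingWeight, List.length_map, stairHeight_map_swap, Nat.add_comm g.2.1.length]

theorem Equidistributed.gluings_congr_right (hB : ∀ i, {L ∈ B | weight L = i}.Finite)
    (h : Equidistributed B weight B' weight) (A : Set (List ℕ)) :
    Equidistributed (gluings A B) gluingWeight (gluings A B') gluingWeight := by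
  obtain ⟨φ, hφ, hweight⟩ := h.exists_bijOn hB
  have hlen : ∀ Y ∈ B, (φ Y).length = Y.length := fun Y hY => congrArg Prod.fst (hweight Y hY)
  have hvis : ∀ Y ∈ B, #(visible (φ Y)) = #(visible Y) := fun Y hY =>
    congrArg Prod.snd (hweight Y hY)
  refine .of_bijOn (φ := fun g => (g.1, φ g.2.1, g.2.2)) ⟨?_, ?_, ?_⟩ ?_
  · exact fun g hg => ⟨hg.1, hφ.mapsTo hg.2.1, (hvis _ hg.2.1).symm ▸ hg.2.2⟩
  · rintro ⟨X, Y, D⟩ ⟨-, hY, -⟩ ⟨X', Y', D'⟩ ⟨-, hY', -⟩ h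
    simp only [Prod.mk.injEq] at h ⊢
    exact ⟨h.1, hφ.injOn hY hY' h.2.1, h.2.2⟩
  · rintro ⟨X, Y', D⟩ ⟨hX, hY', hD⟩
    obtain ⟨Y, hY, hYY'⟩ := hφ.surjOn hY'
    refine ⟨(X, Y, D), ⟨hX, hY, ?_⟩, by simp only [hYY']⟩
    rwa [← hvis Y hY, hYY']
  · exact fun g hg => by simp only [gluingWeight, hlen _ hg.2.1, hvis _ hg.2.1]

theorem RevNC.nLetters_le_length {L : List ℕ} (hL : RevNC L) : nLetters L ≤ L.length := by
  induction L with
  | nil => exact le_rfl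
  | cons a L ih =>
    have := ih hL.1
    exact max_le (hL.head_le.trans (Nat.succ_le_succ this)) (this.trans (Nat.le_succ _))

theorem finite_weight_fibre (hA : A ⊆ {L | RevNC L}) (i : ℕ × ℕ) :
    {L ∈ A | weight L = i}.Finite := by
  refine ((List.finite_length_eq (Fin (i.1 + 1)) i.1).image (List.map Fin.val)).subset ?_
  rintro L ⟨hL, rfl⟩
  have hlt : ∀ x ∈ L, x ∈ Set.range (Fin.val : Fin (L.length + 1) → ℕ) := fun x hx =>
    ⟨⟨x, Nat.lt_succ_of_le ((le_nLetters hx).trans (hA hL).nLetters_le_length)⟩, rfl⟩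
  obtain ⟨M, hM⟩ := (Set.ext_iff.1 (Set.range_list_map Fin.val) L).2 hlt
  exact ⟨M, (List.length_map _).symm.trans (congrArg List.length hM), hM⟩

theorem equidistributed_splits_swap (hA : A ⊆ {L | RevNC L}) (hB : B ⊆ {L | RevNC L})
    (hB' : B' ⊆ {L | RevNC L}) (h : Equidistributed B weight B' weight) :
    Equidistributed (splits B A) (weight ∘ Prod.fst) (splits A B') (weight ∘ Prod.fst) :=
  (equidistributed_splits_gluings hB hA).trans <|
    (equidistributed_gluings_swap B A).trans <|
    (h.gluings_congr_right (finite_weight_fibre hB) A).trans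
    (equidistributed_splits_gluings hA hB').symm

end Gluing

section Containment

theorem lowPart_lowPart {j k : ℕ} (hjk : j ≤ k) (L : List ℕ) :
    lowPart j (lowPart k L) = lowPart j L := by
  simp only [lowPart, List.rtakeWhile, List.reverse_reverse, List.takeWhile_takeWhile]
  congr 2
  ext x
  simpa using fun h => h.trans hjk

theorem highPart_highPart (j k : ℕ) (L : List ℕ) :
    highPart j (highPart k L) = highPart (j + k) L := by
  simp only [highPart, List.filter_map, List.filter_filter, List.map_map]
  congr 1
  · ext x
    simp only [Function.comp_apply]
    omega
  · refine List.filter_congr fun x _ => ?_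
    simp only [Function.comp_apply, ← Bool.decide_and, decide_eq_decide]
    omega

/-- The reversed non-crossing words containing the pattern `σ`. -/
def containing (σ : List ℕ) : Set (List ℕ) := {L | RevNC L ∧ PatContains L.reverse σ}

/-- The reversed non-crossing words avoiding the pattern `σ`. -/
def avoiding (σ : List ℕ) : Set (List ℕ) := {L | RevNC L ∧ PatAvoids L.reverse σ}

variable {σ ρ : List ℕ}

theorem patContains_of_lowPart {k : ℕ} {L : List ℕ}
    (h : PatContains (lowPart k L).reverse σ) : PatContains L.reverse σ :=
  patContains_mono (lowPart_suffix k L).sublist.reverse h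

theorem patContains_of_highPart {k : ℕ} {L : List ℕ}
    (h : PatContains (highPart k L).reverse σ) : PatContains L.reverse σ :=
  patContains_mono List.filter_sublist.reverse (patContains_highPart_reverse_iff.1 h)

theorem patContains_lowPart_mono {j k : ℕ} (hjk : j ≤ k) {L : List ℕ}
    (h : PatContains (lowPart j L).reverse σ) : PatContains (lowPart k L).reverse σ :=
  patContains_of_lowPart ((lowPart_lowPart hjk L).symm ▸ h)

theorem patContains_highPart_anti {j k : ℕ} (hjk : j ≤ k) {L : List ℕ}
    (h : PatContains (highPart k L).reverse σ) : PatContains (highPart j L).reverse σ := by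
  rw [← Nat.sub_add_cancel hjk, ← highPart_highPart] at h
  exact patContains_of_highPart h

/-- The words that contain `σ`, but only with the help of their largest letter: the low parts at
which a growing cut first contains `σ`. -/
def firstOcc (σ : List ℕ) : Set (List ℕ) := containing σ \ containing (rgfComp σ [1])

/-- The words that contain `σ`, but only with the help of their smallest letter: the high parts at
which a growing cut last contains `σ`. -/
def lastOcc (σ : List ℕ) : Set (List ℕ) := containing σ \ containing (rgfComp [1] σ)

theorem RevNC.eq_nil_iff {L : List ℕ} (hL : RevNC L) : L = [] ↔ nLetters L = 0 := by
  refine ⟨fun h => h ▸ rfl, fun h => List.eq_nil_iff_forall_not_mem.2 fun x hx => ?_⟩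
  have := hL.pos x hx
  have := le_nLetters hx
  omega

theorem lowPart_mem_firstOcc_iff {k : ℕ} {L : List ℕ} (hL : RevNC L) (hk : k ≤ nLetters L) :
    lowPart k L ∈ firstOcc σ ↔ IsLeast {j | PatContains (lowPart j L).reverse σ} k := by
  have hlow := revNC_lowPart hL k
  have hcomp : PatContains (lowPart k L).reverse (rgfComp σ [1]) ↔
      ∃ j < k, PatContains (lowPart j L).reverse σ := by
    rw [hlow.patContains_rgfComp_iff (by simp), hL.nLetters_lowPart hk]
    simp only [patContains_singleton_iff, ne_eq, List.reverse_eq_nil_iff, highPart_eq_nil_iff,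
      hL.nLetters_lowPart hk, not_le]
    constructor
    · rintro ⟨j, hjk, hσ, hlt⟩
      exact ⟨j, hlt, lowPart_lowPart hjk L ▸ hσ⟩
    · rintro ⟨j, hlt, hσ⟩
      exact ⟨j, hlt.le, (lowPart_lowPart hlt.le L).symm ▸ hσ, hlt⟩
  simp only [firstOcc, containing, Set.mem_sdiff, Set.mem_ofPred_eq, hlow, true_and, hcomp,
    IsLeast, mem_lowerBounds, not_exists, not_and]
  exact and_congr_right fun _ => forall_congr' fun j => by rw [imp_not_comm, not_lt]

theorem highPart_mem_lastOcc_iff (hσ : ∀ x ∈ σ, 1 ≤ x) {k : ℕ} {L : List ℕ} (hL : RevNC L)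
    (hk : k ≤ nLetters L) : highPart k L ∈ lastOcc σ ↔
      IsGreatest {j | j ≤ nLetters L ∧ PatContains (highPart j L).reverse σ} k := by
  have hhigh := revNC_highPart hL k
  have hcomp : PatContains (highPart k L).reverse (rgfComp [1] σ) ↔
      ∃ j, k < j ∧ j ≤ nLetters L ∧ PatContains (highPart j L).reverse σ := by
    rw [hhigh.patContains_rgfComp_iff hσ]
    simp only [patContains_singleton_iff, ne_eq, List.reverse_eq_nil_iff, highPart_highPart]
    constructor
    · rintro ⟨j, hj, hne, hσ⟩
      rw [(revNC_lowPart hhigh j).eq_nil_iff, hhigh.nLetters_lowPart hj] at hne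
      rw [nLetters_highPart] at hj
      exact ⟨j + k, by omega, by omega, hσ⟩
    · rintro ⟨j, hlt, hj, hσ⟩
      have hjk : j - k ≤ nLetters (highPart k L) := by rw [nLetters_highPart]; omega
      refine ⟨j - k, hjk, ?_, (Nat.sub_add_cancel hlt.le).symm ▸ hσ⟩
      rw [(revNC_lowPart hhigh _).eq_nil_iff, hhigh.nLetters_lowPart hjk]
      omega
  simp only [lastOcc, containing, Set.mem_sdiff, Set.mem_ofPred_eq, hhigh, true_and, hcomp,
    IsGreatest, mem_upperBounds, hk, not_exists, not_and]
  refine and_congr_right fun _ => forall_congr' fun j => ?_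
  grind

theorem mem_containing_sdiff_iff_firstOcc (hρ : ∀ x ∈ ρ, 1 ≤ x) {L : List ℕ} :
    L ∈ containing σ \ containing (rgfComp σ ρ) ↔
      ∃ k, (L, k) ∈ splits (firstOcc σ) (avoiding ρ) := by
  constructor
  · rintro ⟨⟨hL, hσ⟩, hσρ⟩
    have hmax : PatContains (lowPart (nLetters L) L).reverse σ := by rwa [lowPart_eq_self le_rfl]
    obtain ⟨k, hk⟩ := (OrderBot.bddBelow {k | PatContains (lowPart k L).reverse σ})
      |>.exists_isLeast_of_nonempty ⟨nLetters L, hmax⟩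
    have hkL := hk.2 hmax
    exact ⟨k, hL, hkL, (lowPart_mem_firstOcc_iff hL hkL).2 hk, revNC_highPart hL k,
      fun hρk => hσρ ⟨hL, (hL.patContains_rgfComp_iff hρ).2 ⟨k, hkL, hk.1, hρk⟩⟩⟩
  · rintro ⟨k, hL, hk, hfirst, -, hρk⟩
    have hleast := (lowPart_mem_firstOcc_iff hL hk).1 hfirst
    refine ⟨⟨hL, patContains_of_lowPart hleast.1⟩, fun h => ?_⟩
    obtain ⟨j, -, hσj, hρj⟩ := (hL.patContains_rgfComp_iff hρ).1 h.2
    exact hρk (patContains_highPart_anti (hleast.2 hσj) hρj)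

theorem mem_containing_sdiff_iff_lastOcc (hσ : ∀ x ∈ σ, 1 ≤ x) {L : List ℕ} :
    L ∈ containing σ \ containing (rgfComp ρ σ) ↔
      ∃ k, (L, k) ∈ splits (avoiding ρ) (lastOcc σ) := by
  constructor
  · rintro ⟨⟨hL, hσL⟩, hρσ⟩
    have hzero : PatContains (highPart 0 L).reverse σ := by
      rwa [show highPart 0 L = L by simpa using highPart_map_add_self hL.pos 0]
    obtain ⟨k, hk⟩ := BddAbove.exists_isGreatest_of_nonempty
      (S := {k | k ≤ nLetters L ∧ PatContains (highPart k L).reverse σ})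
      ⟨nLetters L, fun _ hj => hj.1⟩ ⟨0, Nat.zero_le _, hzero⟩
    have hkL := hk.1.1
    exact ⟨k, hL, hkL, ⟨revNC_lowPart hL k, fun hρk => hρσ ⟨hL, (hL.patContains_rgfComp_iff hσ).2
      ⟨k, hkL, hρk, hk.1.2⟩⟩⟩, (highPart_mem_lastOcc_iff hσ hL hkL).2 hk⟩
  · rintro ⟨k, hL, hk, ⟨-, hρk⟩, hlast⟩
    have hgreatest := (highPart_mem_lastOcc_iff hσ hL hk).1 hlast
    refine ⟨⟨hL, patContains_of_highPart hgreatest.1.2⟩, fun h => ?_⟩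
    obtain ⟨j, hj, hρj, hσj⟩ := (hL.patContains_rgfComp_iff hσ).1 h.2
    exact hρk (patContains_lowPart_mono (hgreatest.2 ⟨hj, hσj⟩) hρj)

theorem equidistributed_fst_splits {A B W : Set (List ℕ)}
    (hW : ∀ L, L ∈ W ↔ ∃ k, (L, k) ∈ splits A B)
    (hunique : ∀ L k k', (L, k) ∈ splits A B → (L, k') ∈ splits A B → k = k') :
    Equidistributed (splits A B) (weight ∘ Prod.fst) W weight := by
  refine .of_bijOn (φ := Prod.fst) ⟨fun c hc => (hW _).2 ⟨c.2, hc⟩, ?_, fun L hL => ?_⟩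
    fun _ _ => rfl
  · rintro ⟨L, k⟩ hk ⟨_, k'⟩ hk' rfl
    rw [hunique L k k' hk hk']
  · obtain ⟨k, hk⟩ := (hW L).1 hL
    exact ⟨(L, k), hk, rfl⟩

theorem equidistributed_splits_firstOcc (hρ : ∀ x ∈ ρ, 1 ≤ x) :
    Equidistributed (splits (firstOcc σ) (avoiding ρ)) (weight ∘ Prod.fst)
      (containing σ \ containing (rgfComp σ ρ)) weight :=
  equidistributed_fst_splits (fun _ => mem_containing_sdiff_iff_firstOcc hρ)
    fun _ _ _ ⟨hL, hk, hlow, _⟩ ⟨_, hk', hlow', _⟩ =>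
      ((lowPart_mem_firstOcc_iff hL hk).1 hlow).unique ((lowPart_mem_firstOcc_iff hL hk').1 hlow')

theorem equidistributed_splits_lastOcc (hσ : ∀ x ∈ σ, 1 ≤ x) :
    Equidistributed (splits (avoiding ρ) (lastOcc σ)) (weight ∘ Prod.fst)
      (containing σ \ containing (rgfComp ρ σ)) weight :=
  equidistributed_fst_splits (fun _ => mem_containing_sdiff_iff_lastOcc hσ)
    fun _ _ _ ⟨hL, hk, _, hhigh⟩ ⟨_, hk', _, hhigh'⟩ =>
      ((highPart_mem_lastOcc_iff hσ hL hk).1 hhigh).unique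
        ((highPart_mem_lastOcc_iff hσ hL hk').1 hhigh')

end Containment

section Commutation

variable {σ ρ : List ℕ}

theorem containing_subset (σ : List ℕ) : containing σ ⊆ {L | RevNC L} := fun _ hL => hL.1

theorem containing_rgfComp_subset_left (hρ : ∀ x ∈ ρ, 1 ≤ x) :
    containing (rgfComp σ ρ) ⊆ containing σ := fun L hL => by
  obtain ⟨k, -, hσ, -⟩ := (hL.1.patContains_rgfComp_iff hρ).1 hL.2
  exact ⟨hL.1, patContains_of_lowPart hσ⟩

theorem containing_rgfComp_subset_right (hσ : ∀ x ∈ σ, 1 ≤ x) :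
    containing (rgfComp ρ σ) ⊆ containing σ := fun L hL => by
  obtain ⟨k, -, -, h⟩ := (hL.1.patContains_rgfComp_iff hσ).1 hL.2
  exact ⟨hL.1, patContains_of_highPart h⟩

theorem Equidistributed.containing_rgfComp_comm (hσ : ∀ x ∈ σ, 1 ≤ x) (hρ : ∀ x ∈ ρ, 1 ≤ x)
    (h : Equidistributed (firstOcc σ) weight (lastOcc σ) weight) :
    Equidistributed (containing (rgfComp σ ρ)) weight (containing (rgfComp ρ σ)) weight := by
  have hsplits := equidistributed_splits_swap (A := avoiding ρ) (fun _ hL => hL.1)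
    (fun _ hL => hL.1.1) (fun _ hL => hL.1.1) h
  have hcompl := (equidistributed_splits_firstOcc hρ).symm.trans
    (hsplits.trans (equidistributed_splits_lastOcc hσ))
  have := Equidistributed.sdiff (finite_weight_fibre (containing_subset σ)) Set.sdiff_subset
    Set.sdiff_subset hcompl fun _ => rfl
  rwa [Set.sdiff_sdiff_cancel_left (containing_rgfComp_subset_left hρ),
    Set.sdiff_sdiff_cancel_left (containing_rgfComp_subset_right hσ)] at this

/-- For the pattern `[1]` both sides are the same set; the commutation of `[1]` with `σ` that
follows is the claim for `σ`. -/
theorem equidistributed_firstOcc_lastOcc (hσ : ∀ x ∈ σ, 1 ≤ x) :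
    Equidistributed (firstOcc σ) weight (lastOcc σ) weight := by
  have hone : Equidistributed (firstOcc [1]) weight (lastOcc [1]) weight := fun _ => rfl
  exact .sdiff (finite_weight_fibre (containing_subset σ))
    (containing_rgfComp_subset_left (by simp)) (containing_rgfComp_subset_right hσ)
    (hone.containing_rgfComp_comm (by simp) hσ).symm fun _ => rfl

theorem equidistributed_avoiding_rgfComp_comm (hσ : ∀ x ∈ σ, 1 ≤ x) (hρ : ∀ x ∈ ρ, 1 ≤ x) :
    Equidistributed (avoiding (rgfComp σ ρ)) weight (avoiding (rgfComp ρ σ)) weight := by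
  have havoid : ∀ τ, avoiding τ = {L | RevNC L} \ containing τ := fun τ => by
    ext L
    simp only [avoiding, containing, PatAvoids, Set.mem_sdiff, Set.mem_ofPred_eq]
    tauto
  rw [havoid, havoid]
  exact .sdiff (finite_weight_fibre subset_rfl) (containing_subset _) (containing_subset _)
    ((equidistributed_firstOcc_lastOcc hσ).containing_rgfComp_comm hσ hρ) fun _ => rfl

theorem ncCount_eq (n p : ℕ) (τ : List ℕ) :
    ncCount n p τ = {L ∈ avoiding τ | weight L = (n, p)}.encard.toNat := by
  rw [← Set.ncard_def, ncCount, ← Set.ncard_image_of_injective _ List.reverse_injective]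
  congr 1
  rw [List.reverse_involutive.image_eq_preimage_symm]
  ext L
  have hcomp : RevNC L → (HasComponents L.reverse p ↔ #(visible L) = p) := fun hL => by
    rw [hasComponents_iff (by rwa [List.reverse_reverse]), List.reverse_reverse]
  simp only [Set.mem_preimage, Set.mem_ofPred_eq, avoiding, weight, Prod.mk.injEq,
    List.length_reverse]
  rw [revNC_iff] at hcomp ⊢
  tauto

end Commutation

end NonCrossingRGF

theorem stmt7_general (σ ρ : List ℕ) (hσ : ∀ x ∈ σ, 1 ≤ x) (hρ : ∀ x ∈ ρ, 1 ≤ x) :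
    ccEquiv (rgfComp σ ρ) (rgfComp ρ σ) := fun n p => by
  rw [NonCrossingRGF.ncCount_eq, NonCrossingRGF.ncCount_eq,
    NonCrossingRGF.equidistributed_avoiding_rgfComp_comm hσ hρ]

/-- Theorem 3.3: if `σ` is connected, then `σ[ρ] ≃cc ρ[σ]`. -/
theorem stmt7 (σ ρ : List ℕ)
    (hσ : IsRGF σ) (hσnc : NonCrossing σ) (hσc : Connected σ)
    (hρ : IsRGF ρ) (hρnc : NonCrossing ρ) :
    ccEquiv (rgfComp σ ρ) (rgfComp ρ σ) :=
  stmt7_general σ ρ hσ.1 hρ.1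
end
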